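/- arXiv:math/0610206 — 2 statements merged into one kernel-verified Lean document; each statement's English description precedes it below -/
import Mathlib

section
/- Fix an integer k ≥ 1. Let U^{(2),k}_0(Ω∞) be the set of functions Ω∞° → ℝ³ of the form u(x,y,z) = (z^{k−1}/(1+z)^{k+2})·( 2t, 2s, (1+z)(∂s/∂y + ∂t/∂x) ) + ( x(1−x)·χ₁, y(1−y)·χ₂, z·χ₃ ), where s = y(1−y)σ(x,y) with σ ∈ Q^{k−1,k−2}[x,y], t = x(1−x)τ(x,y) with τ ∈ Q^{k−2,k−1}[x,y], χ₁ ∈ Q^{k−2,k−1,k−2}_{k+2}, χ₂ ∈ Q^{k−1,k−2,k−2}_{k+2}, χ₃ ∈ Q^{k−1,k−1,k−2}_{k+2}. Then every u ∈ U^{(2),k}_0(Ω∞) can be written, uniquely, as u = curl w₁ + w₂ on Ω∞°, where w₁ ∈ U^{(1),k}_{0,curl}(Ω∞) and w₂ ∈ U^{(2),k}_{0,div}(Ω∞). -/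
noncomputable section

/-- The interior `Ω∞° = (0,1) × (0,1) × (0,∞)` of the infinite pyramid. -/
def PyrInfInt : Set (ℝ × ℝ × ℝ) :=
  {p | 0 < p.1 ∧ p.1 < 1 ∧ 0 < p.2.1 ∧ p.2.1 < 1 ∧ 0 < p.2.2}

/-- The weighted monomial `x^a y^b z^c / (1+z)^k`. -/
def qmon (k a b c : ℕ) : ℝ × ℝ × ℝ → ℝ :=
  fun p => p.1 ^ a * p.2.1 ^ b * p.2.2 ^ c / (1 + p.2.2) ^ k

/-- The space `Q^{l,m,n}_k`. -/
def Qsp (l m n : ℤ) (k : ℕ) : Submodule ℝ ((ℝ × ℝ × ℝ) → ℝ) :=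
  Submodule.span ℝ
    {f | ∃ a b c : ℕ, (a : ℤ) ≤ l ∧ (b : ℤ) ≤ m ∧ (c : ℤ) ≤ n ∧ f = qmon k a b c}

/-- Partial derivative in `x`. -/
def pdx (f : ℝ × ℝ × ℝ → ℝ) (p : ℝ × ℝ × ℝ) : ℝ := fderiv ℝ f p ((1 : ℝ), (0 : ℝ), (0 : ℝ))

/-- Partial derivative in `y`. -/
def pdy (f : ℝ × ℝ × ℝ → ℝ) (p : ℝ × ℝ × ℝ) : ℝ := fderiv ℝ f p ((0 : ℝ), (1 : ℝ), (0 : ℝ))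

/-- Partial derivative in `z`. -/
def pdz (f : ℝ × ℝ × ℝ → ℝ) (p : ℝ × ℝ × ℝ) : ℝ := fderiv ℝ f p ((0 : ℝ), (0 : ℝ), (1 : ℝ))

/-- The curl of a vector field at a point. -/
def curl3 (f : ℝ × ℝ × ℝ → ℝ × ℝ × ℝ) (p : ℝ × ℝ × ℝ) : ℝ × ℝ × ℝ :=
  (pdy (fun q => (f q).2.2) p - pdz (fun q => (f q).2.1) p,
   pdz (fun q => (f q).1) p - pdx (fun q => (f q).2.2) p,
   pdx (fun q => (f q).2.1) p - pdy (fun q => (f q).1) p)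

/-- The generic element of `U^{(1),k}_{0,curl}(Ω∞)`. -/
def U1curlFun (k : ℕ) (p₁ p₂ : MvPolynomial (Fin 3) ℝ) (ρ : MvPolynomial (Fin 2) ℝ) :
    ℝ × ℝ × ℝ → ℝ × ℝ × ℝ :=
  fun p =>
    ((p.2.1 * (1 - p.2.1) * p.2.2 * MvPolynomial.eval ![p.1, p.2.1, p.2.2] p₁) /
        (1 + p.2.2) ^ (k + 1),
     (p.1 * (1 - p.1) * p.2.2 * MvPolynomial.eval ![p.1, p.2.1, p.2.2] p₂) /
        (1 + p.2.2) ^ (k + 1),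
     (p.1 * (1 - p.1) * p.2.1 * (1 - p.2.1) * MvPolynomial.eval ![p.1, p.2.1] ρ) /
        (1 + p.2.2) ^ (k + 1))

/-- Degree constraints for `U^{(1),k}_{0,curl}(Ω∞)` (bounds in `ℤ`). -/
def U1curlBounds (k : ℕ) (p₁ p₂ : MvPolynomial (Fin 3) ℝ)
    (ρ : MvPolynomial (Fin 2) ℝ) : Prop :=
  (∀ d ∈ p₁.support,
    (d 0 : ℤ) ≤ (k : ℤ) - 1 ∧ (d 1 : ℤ) ≤ (k : ℤ) - 2 ∧ (d 2 : ℤ) ≤ (k : ℤ) - 2) ∧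
  (∀ d ∈ p₂.support,
    (d 0 : ℤ) ≤ (k : ℤ) - 2 ∧ (d 1 : ℤ) ≤ (k : ℤ) - 1 ∧ (d 2 : ℤ) ≤ (k : ℤ) - 2) ∧
  (∀ d ∈ ρ.support, (d 0 : ℤ) ≤ (k : ℤ) - 2 ∧ (d 1 : ℤ) ≤ (k : ℤ) - 2)

/-- `x(1−x)y(1−y)·p` as a polynomial in two variables. -/
def bub2 (p : MvPolynomial (Fin 2) ℝ) : MvPolynomial (Fin 2) ℝ :=
  MvPolynomial.X 0 * (1 - MvPolynomial.X 0) * MvPolynomial.X 1 * (1 - MvPolynomial.X 1) * p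

/-- `x(1−x)·t̃` as a polynomial in one variable. -/
def bub1 (t : Polynomial ℝ) : Polynomial ℝ := Polynomial.X * (1 - Polynomial.X) * t

/-- The generic element of `U^{(2),k}_{0,div}(Ω∞)`. -/
def U2divFun (k : ℕ) (p : MvPolynomial (Fin 2) ℝ) (t s : Polynomial ℝ)
    (χ : (ℝ × ℝ × ℝ) → ℝ) : ℝ × ℝ × ℝ → ℝ × ℝ × ℝ :=
  fun q =>
    (q.2.2 ^ (k - 1) / (1 + q.2.2) ^ (k + 2)) •
      (MvPolynomial.eval ![q.1, q.2.1] (MvPolynomial.pderiv 1 (bub2 p)) +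
         2 * (bub1 t).eval q.1,
       MvPolynomial.eval ![q.1, q.2.1] (MvPolynomial.pderiv 0 (bub2 p)) +
         2 * (bub1 s).eval q.2.1,
       (1 + q.2.2) *
         (MvPolynomial.eval ![q.1, q.2.1]
            (MvPolynomial.pderiv 0 (MvPolynomial.pderiv 1 (bub2 p))) +
          (Polynomial.derivative (bub1 s)).eval q.2.1 +
          (Polynomial.derivative (bub1 t)).eval q.1)) +
    ((0 : ℝ), (0 : ℝ), q.2.2 * χ q)

/-- Degree constraints for the polynomial data of `U^{(2),k}_{0,div}(Ω∞)`. -/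
def U2divBounds (k : ℕ) (p : MvPolynomial (Fin 2) ℝ) (t s : Polynomial ℝ) : Prop :=
  (∀ d ∈ p.support, (d 0 : ℤ) ≤ (k : ℤ) - 2 ∧ (d 1 : ℤ) ≤ (k : ℤ) - 2) ∧
  (∀ n ∈ t.support, (n : ℤ) ≤ (k : ℤ) - 2) ∧
  (∀ n ∈ s.support, (n : ℤ) ≤ (k : ℤ) - 2)

/-- The generic element of `U^{(2),k}_0(Ω∞)` determined by `σ ∈ Q^{k−1,k−2}[x,y]`,
`τ ∈ Q^{k−2,k−1}[x,y]` and `χ₁, χ₂, χ₃`: with `s = y(1−y)σ`, `t = x(1−x)τ`, the field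
`(z^{k−1}/(1+z)^{k+2})·(2t, 2s, (1+z)(s_y + t_x)) + (x(1−x)χ₁, y(1−y)χ₂, z·χ₃)`. -/
def U2zeroFun (k : ℕ) (σ τ : MvPolynomial (Fin 2) ℝ)
    (χ₁ χ₂ χ₃ : (ℝ × ℝ × ℝ) → ℝ) : ℝ × ℝ × ℝ → ℝ × ℝ × ℝ :=
  fun q =>
    (q.2.2 ^ (k - 1) / (1 + q.2.2) ^ (k + 2)) •
      (2 * MvPolynomial.eval ![q.1, q.2.1]
          (MvPolynomial.X 0 * (1 - MvPolynomial.X 0) * τ),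
       2 * MvPolynomial.eval ![q.1, q.2.1]
          (MvPolynomial.X 1 * (1 - MvPolynomial.X 1) * σ),
       (1 + q.2.2) *
         (MvPolynomial.eval ![q.1, q.2.1]
            (MvPolynomial.pderiv 1 (MvPolynomial.X 1 * (1 - MvPolynomial.X 1) * σ)) +
          MvPolynomial.eval ![q.1, q.2.1]
            (MvPolynomial.pderiv 0 (MvPolynomial.X 0 * (1 - MvPolynomial.X 0) * τ)))) +
    (q.1 * (1 - q.1) * χ₁ q, q.2.1 * (1 - q.2.1) * χ₂ q, q.2.2 * χ₃ q)

open MvPolynomial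

/-- Degree bounds in each variable. -/
def Bd {ι : Type} (b : ι → ℕ) (p : MvPolynomial ι ℝ) : Prop := ∀ i, degreeOf i p ≤ b i

theorem Bd.mono {ι : Type} {b b' : ι → ℕ} {p : MvPolynomial ι ℝ} (h : Bd b p)
    (hb : ∀ i, b i ≤ b' i) : Bd b' p := fun i => (h i).trans (hb i)

theorem Bd.add {ι : Type} {b : ι → ℕ} {p q : MvPolynomial ι ℝ} (h : Bd b p) (h' : Bd b q) :
    Bd b (p + q) := fun i => (degreeOf_add_le i p q).trans (max_le (h i) (h' i))

theorem Bd.neg {ι : Type} {b : ι → ℕ} {p : MvPolynomial ι ℝ} (h : Bd b p) :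
    Bd b (-p) := fun i => by rw [degreeOf_neg]; exact h i

theorem Bd.sub {ι : Type} {b : ι → ℕ} {p q : MvPolynomial ι ℝ} (h : Bd b p) (h' : Bd b q) :
    Bd b (p - q) := by rw [sub_eq_add_neg]; exact h.add h'.neg

theorem Bd.mul {ι : Type} {b b' b'' : ι → ℕ} {p q : MvPolynomial ι ℝ} (h : Bd b p)
    (h' : Bd b' q) (hb : ∀ i, b i + b' i ≤ b'' i) : Bd b'' (p * q) :=
  fun i => (degreeOf_mul_le i p q).trans ((add_le_add (h i) (h' i)).trans (hb i))

theorem Bd.C_mul {ι : Type} {b : ι → ℕ} {p : MvPolynomial ι ℝ} (h : Bd b p) (c : ℝ) :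
    Bd b (C c * p) := fun i => (degreeOf_C_mul_le p i c).trans (h i)

theorem Bd.zero {ι : Type} {b : ι → ℕ} : Bd b (0 : MvPolynomial ι ℝ) := fun i => by simp

theorem Bd.monomial {ι : Type} {b : ι → ℕ} {d : ι →₀ ℕ} (h : ∀ i, d i ≤ b i) (r : ℝ) :
    Bd b (monomial d r) := fun i => by
  by_cases hr : r = 0
  · simp [hr]
  · rw [degreeOf_monomial_eq _ _ hr]; exact h i

theorem Bd.X_pow {ι : Type} {b : ι → ℕ} (j : ι) (m : ℕ) (h : m ≤ b j) :
    Bd b (X j ^ m : MvPolynomial ι ℝ) := by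
  classical
  rw [X_pow_eq_monomial]
  apply Bd.monomial
  intro i
  rw [Finsupp.single_apply]
  split_ifs with hh
  · subst hh; exact h
  · exact Nat.zero_le _

theorem Bd.induction {ι : Type} {b : ι → ℕ} {M : MvPolynomial ι ℝ → Prop}
    {p : MvPolynomial ι ℝ} (hp : Bd b p) (h0 : M 0) (hadd : ∀ p q, M p → M q → M (p + q))
    (hmon : ∀ (d : ι →₀ ℕ) (r : ℝ), (∀ i, d i ≤ b i) → M (MvPolynomial.monomial d r)) : M p := by
  rw [p.as_sum]
  refine Finset.sum_induction _ M hadd h0 ?_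
  intro d hd
  exact hmon d _ fun i => (le_degreeOf_of_mem_support i hd).trans (hp i)

/-- the one-variable bubble `X_i (1 - X_i) p` -/
def bu {ι : Type} (i : ι) (p : MvPolynomial ι ℝ) : MvPolynomial ι ℝ := X i * (1 - X i) * p

theorem bu_add {ι : Type} (i : ι) (p q : MvPolynomial ι ℝ) : bu i (p + q) = bu i p + bu i q := by
  unfold bu; ring

theorem pderiv_comm' {ι : Type} (i j : ι) (p : MvPolynomial ι ℝ) :
    pderiv i (pderiv j p) = pderiv j (pderiv i p) := by
  classical
  induction p using MvPolynomial.induction_on with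
  | C a => simp
  | add p q hp hq => simp [hp, hq]
  | mul_X p m hp =>
    have hX : ∀ a b : ι, pderiv a (pderiv b (X m : MvPolynomial ι ℝ)) = 0 := by
      intro a b
      rw [pderiv_X]
      by_cases h : m = b
      · subst h; simp
      · simp [h]
    simp only [pderiv_mul, map_add, hX, hp]
    ring

theorem Bd.dbu {ι : Type} [DecidableEq ι] {b b' : ι → ℕ} {p : MvPolynomial ι ℝ} (h : Bd b p)
    (i : ι) (hb : ∀ j, b j + (if j = i then 1 else 0) ≤ b' j) : Bd b' (pderiv i (bu i p)) := by
  refine h.induction (M := fun p => Bd b' (pderiv i (bu i p))) ?_ ?_ ?_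
  · simp [bu, Bd.zero]
  · intro p q hp hq
    rw [bu_add, map_add]; exact hp.add hq
  · intro d r hd
    have : bu i (MvPolynomial.monomial d r) =
        MvPolynomial.monomial (d + Finsupp.single i 1) r -
        MvPolynomial.monomial (d + Finsupp.single i 2) r := by
      have e1 : (MvPolynomial.monomial (d + Finsupp.single i 1) r : MvPolynomial ι ℝ) =
          MvPolynomial.monomial d r * X i ^ 1 := by
        rw [X_pow_eq_monomial, monomial_mul, mul_one]
      have e2 : (MvPolynomial.monomial (d + Finsupp.single i 2) r : MvPolynomial ι ℝ) =
          MvPolynomial.monomial d r * X i ^ 2 := by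
        rw [X_pow_eq_monomial, monomial_mul, mul_one]
      rw [e1, e2, bu]; ring
    rw [this, map_sub, pderiv_monomial, pderiv_monomial]
    apply Bd.sub <;> apply Bd.monomial
    all_goals
      intro j
      have h1 := hd j
      have h2 := hb j
      by_cases hj : j = i
      · subst hj
        simp at h2 ⊢
        omega
      · simp [hj] at h2 ⊢
        omega

/-- embedding of two-variable polynomials -/
def emb (p : MvPolynomial (Fin 2) ℝ) : MvPolynomial (Fin 3) ℝ := rename Fin.castSucc p

theorem emb_inj : Function.Injective emb := rename_injective _ (Fin.castSucc_injective 2)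
theorem emb_add (p q) : emb (p + q) = emb p + emb q := map_add _ _ _
theorem emb_sub (p q) : emb (p - q) = emb p - emb q := map_sub _ _ _
theorem emb_neg (p) : emb (-p) = - emb p := map_neg _ _
theorem emb_zero : emb 0 = 0 := map_zero _
theorem emb_mul (p q) : emb (p * q) = emb p * emb q := map_mul _ _ _
theorem emb_C (c : ℝ) : emb (C c) = C c := rename_C _ _
theorem emb_bu (i : Fin 2) (p) : emb (bu i p) = bu i.castSucc (emb p) := by
  simp [emb, bu]
theorem emb_pd (i : Fin 2) (p) : pderiv i.castSucc (emb p) = emb (pderiv i p) :=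
  pderiv_rename (Fin.castSucc_injective 2) i p
theorem emb_pd2 (p) : pderiv 2 (emb p) = 0 := by
  induction p using MvPolynomial.induction_on with
  | C a => simp [emb_C]
  | add p q hp hq => simp [emb_add, hp, hq]
  | mul_X p m hp =>
    rw [emb_mul, pderiv_mul, hp]
    have : pderiv 2 (emb (X m)) = 0 := by
      fin_cases m <;> simp [emb, pderiv_X]
    simp [this]
theorem emb_eval (x y z : ℝ) (p) : eval ![x, y, z] (emb p) = eval ![x, y] p := by
  rw [emb, eval_rename]
  congr 2
  ext i; fin_cases i <;> rfl

theorem Bd.emb {b : Fin 2 → ℕ} {b' : Fin 3 → ℕ} {p : MvPolynomial (Fin 2) ℝ} (h : Bd b p)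
    (hb : ∀ i : Fin 2, b i ≤ b' i.castSucc) : Bd b' (emb p) := by
  refine h.induction (M := fun p => Bd b' (_root_.emb p)) ?_ ?_ ?_
  · simp [emb_zero, Bd.zero]
  · intro p q hp hq
    rw [emb_add]; exact hp.add hq
  · intro d r hd
    rw [_root_.emb, rename_monomial]
    apply Bd.monomial
    intro i
    refine Fin.lastCases ?_ (fun j => ?_) i
    · rw [Finsupp.mapDomain_of_notMem_range]
      · simp
      · rintro ⟨j, hj⟩
        exact (Fin.castSucc_lt_last j).ne hj
    · rw [Finsupp.mapDomain_apply (Fin.castSucc_injective 2)]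
      exact (hd j).trans (hb j)

/-- `D P = (1+z)^{k+2} ∂_z (z P / (1+z)^{k+1})` with `k = n + 2`. -/
def DD (n : ℕ) (P : MvPolynomial (Fin 3) ℝ) : MvPolynomial (Fin 3) ℝ :=
  (1 + X 2) * (P + X 2 * pderiv 2 P) - C ((n : ℝ) + 3) * X 2 * P

theorem DD_add (n P Q) : DD n (P + Q) = DD n P + DD n Q := by
  simp only [DD, map_add]; ring

theorem DD_neg (n P) : DD n (-P) = - DD n P := by
  simp only [DD, map_neg]; ring

theorem DD_mul (n P Q) (h : pderiv 2 Q = 0) : DD n (P * Q) = DD n P * Q := by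
  simp only [DD, pderiv_mul, h]; ring

theorem DD_C_mul (n c P) : DD n (C c * P) = C c * DD n P := by
  simp only [DD, pderiv_C_mul]; ring

theorem DD_X_pow (n c : ℕ) : DD n (X 2 ^ c) =
    C ((c : ℝ) + 1) * X 2 ^ c - C ((n : ℝ) + 2 - c) * X 2 ^ (c + 1) := by
  have h3 : (C 3 : MvPolynomial (Fin 3) ℝ) = 3 := map_ofNat C 3
  have h2 : (C 2 : MvPolynomial (Fin 3) ℝ) = 2 := map_ofNat C 2
  rcases c with _ | c
  · simp [DD, h2, h3]; ring
  · simp [DD, h2, h3]; ring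

theorem low_exists (n : ℕ) (m : ℕ) : ∀ c : ℕ, c + m = n → ∃ (γ : ℝ) (low : MvPolynomial (Fin 3) ℝ),
    0 < γ ∧ Bd ![0, 0, n] low ∧ Bd ![0, 0, n] ((1 + X 2) * low) ∧
    (∀ i : Fin 2, pderiv i.castSucc low = 0) ∧
    X 2 ^ c = DD n (C (γ / 2) * X 2 ^ n + low) + C γ * X 2 ^ (n + 1) := by
  induction m with
  | zero =>
    rintro c rfl
    refine ⟨2 / ((c : ℝ) + 1), 0, by positivity, Bd.zero, by simp [Bd.zero], by simp, ?_⟩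
    have h1 : ((c : ℝ) + 1) ≠ 0 := by positivity
    simp only [add_zero]
    rw [DD_C_mul, DD_X_pow]
    have e1 : (C (2 / ((c : ℝ) + 1) / 2) * C ((c : ℝ) + 1) : MvPolynomial (Fin 3) ℝ) = 1 := by
      rw [← C_mul, ← C_1]; congr 1; field_simp
    have e2 : (C (2 / ((c : ℝ) + 1) / 2) * C ((c : ℝ) + 2 - c) : MvPolynomial (Fin 3) ℝ) =
        C (2 / ((c : ℝ) + 1)) := by
      rw [← C_mul]; congr 1; field_simp; ring
    linear_combination (- X 2 ^ c) * e1 + X 2 ^ (c + 1) * e2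
  | succ m ih =>
    intro c hc
    obtain ⟨γ, low, hγ, hl, hl1, hl0, he⟩ := ih (c + 1) (by omega)
    have h1 : ((c : ℝ) + 1) ≠ 0 := by positivity
    have h2 : 0 < (n : ℝ) + 2 - c := by
      have : (c : ℝ) ≤ n := by exact_mod_cast (by omega : c ≤ n)
      linarith
    have hXc : ∀ c' ≤ n, Bd ![0, 0, n] (X 2 ^ c' : MvPolynomial (Fin 3) ℝ) := fun c' hc' =>
      Bd.X_pow 2 c' (by simpa using hc')
    refine ⟨((n : ℝ) + 2 - c) / (c + 1) * γ,
      C (1 / ((c : ℝ) + 1)) * X 2 ^ c + C (((n : ℝ) + 2 - c) / (c + 1)) * low,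
      by positivity, ?_, ?_, ?_, ?_⟩
    · exact ((hXc c (by omega)).C_mul _).add (hl.C_mul _)
    · have : (1 + X 2) * (C (1 / ((c : ℝ) + 1)) * X 2 ^ c + C (((n : ℝ) + 2 - c) / (c + 1)) * low)
        = C (1 / ((c : ℝ) + 1)) * (X 2 ^ c + X 2 ^ (c + 1)) +
          C (((n : ℝ) + 2 - c) / (c + 1)) * ((1 + X 2) * low) := by ring
      rw [this]
      exact (((hXc c (by omega)).add (hXc (c + 1) (by omega))).C_mul _).add (hl1.C_mul _)
    · intro i
      simp only [map_add, pderiv_C_mul, hl0]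
      have : (2 : Fin 3) ≠ i.castSucc := by fin_cases i <;> decide
      simp [pderiv_X_of_ne this]
    · have e0 : DD n (C (((n : ℝ) + 2 - c) / (c + 1) * γ / 2) * X 2 ^ n +
          (C (1 / ((c : ℝ) + 1)) * X 2 ^ c + C (((n : ℝ) + 2 - c) / (c + 1)) * low)) =
          C (1 / ((c : ℝ) + 1)) * DD n (X 2 ^ c) +
          C (((n : ℝ) + 2 - c) / (c + 1)) * DD n (C (γ / 2) * X 2 ^ n + low) := by
        simp only [DD_add, DD_C_mul]
        have : (C (((n : ℝ) + 2 - c) / (c + 1) * γ / 2) : MvPolynomial (Fin 3) ℝ) =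
          C (((n : ℝ) + 2 - c) / (c + 1)) * C (γ / 2) := by rw [← C_mul]; congr 1; ring
        rw [this]; ring
      rw [e0, DD_X_pow]
      have e1 : (C (1 / ((c : ℝ) + 1)) * C ((c : ℝ) + 1) : MvPolynomial (Fin 3) ℝ) = 1 := by
        rw [← C_mul, ← C_1]; congr 1; field_simp
      have e2 : (C (1 / ((c : ℝ) + 1)) * C ((n : ℝ) + 2 - c) : MvPolynomial (Fin 3) ℝ) =
          C (((n : ℝ) + 2 - c) / (c + 1)) := by
        rw [← C_mul]; congr 1; field_simp
      have e3 : (C (((n : ℝ) + 2 - c) / (c + 1) * γ) : MvPolynomial (Fin 3) ℝ) =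
          C (((n : ℝ) + 2 - c) / (c + 1)) * C γ := by rw [← C_mul]
      rw [e3]
      linear_combination (- X 2 ^ c) * e1 + X 2 ^ (c + 1) * e2 +
        C (((n : ℝ) + 2 - c) / (c + 1)) * he

theorem Q_exists (n : ℕ) : ∃ (γ : ℝ) (Q : MvPolynomial (Fin 3) ℝ),
    0 < γ ∧ Bd ![0, 0, n] Q ∧ (∀ i : Fin 2, pderiv i.castSucc Q = 0) ∧
    1 + X 2 = DD n Q + C γ * X 2 ^ (n + 1) := by
  have key : ∀ c ≤ n + 1, ∃ (γ : ℝ) (Q : MvPolynomial (Fin 3) ℝ),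
    0 < γ ∧ Bd ![0, 0, n] Q ∧ (∀ i : Fin 2, pderiv i.castSucc Q = 0) ∧
    X 2 ^ c = DD n Q + C γ * X 2 ^ (n + 1) := by
    intro c hc
    rcases Nat.lt_or_ge n c with h | h
    · obtain rfl : c = n + 1 := by omega
      exact ⟨1, 0, one_pos, Bd.zero, by simp, by simp [DD]⟩
    · obtain ⟨γ, low, hγ, hl, hl1, hl0, he⟩ := low_exists n (n - c) c (by omega)
      refine ⟨γ, _, hγ, ((Bd.X_pow 2 n (by simp)).C_mul _).add hl, ?_, he⟩
      intro i
      have : (2 : Fin 3) ≠ i.castSucc := by fin_cases i <;> decide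
      simp [hl0, pderiv_X_of_ne this]
  obtain ⟨γ, Q, h1, h2, h3, h4⟩ := key 0 (by omega)
  obtain ⟨γ', Q', h1', h2', h3', h4'⟩ := key 1 (by omega)
  refine ⟨γ + γ', Q + Q', by positivity, h2.add h2', ?_, ?_⟩
  · intro i; simp [h3, h3']
  · rw [DD_add, C_add]
    linear_combination h4 + h4'

theorem bu_C_mul {ι : Type} (i : ι) (c : ℝ) (p : MvPolynomial ι ℝ) :
    bu i (C c * p) = C c * bu i p := by unfold bu; ring

theorem bu_neg {ι : Type} (i : ι) (p : MvPolynomial ι ℝ) : bu i (-p) = - bu i p := by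
  unfold bu; ring

theorem bu_sub {ι : Type} (i : ι) (p q : MvPolynomial ι ℝ) : bu i (p - q) = bu i p - bu i q := by
  unfold bu; ring

theorem dbu_mul {ι : Type} (i : ι) (Q p : MvPolynomial ι ℝ) (h : pderiv i Q = 0) :
    pderiv i (bu i (Q * p)) = Q * pderiv i (bu i p) := by
  have : bu i (Q * p) = Q * bu i p := by unfold bu; ring
  rw [this, pderiv_mul, h]; ring

/-- Reduction of a numerator modulo the image of `DD`. -/
theorem red (n : ℕ) (i j : Fin 2) (hij : i ≠ j) (N : MvPolynomial (Fin 3) ℝ)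
    (hN : Bd (fun m => if m = j.castSucc then n + 1 else n) N) :
    ∃ (P W : MvPolynomial (Fin 3) ℝ) (α : MvPolynomial (Fin 2) ℝ),
      Bd (fun m => if m = j.castSucc then n + 1 else n) P ∧
      Bd (fun m => if m = j then n + 1 else n) α ∧
      Bd ![n + 1, n + 1, n] W ∧
      N = DD n P + emb α * X 2 ^ (n + 1) ∧
      (1 + X 2) * pderiv i.castSucc (bu i.castSucc P) =
        W + C (1 / 2) * (1 + X 2) * X 2 ^ n * emb (pderiv i (bu i α)) := by
  refine hN.induction (M := fun N => ∃ (P W : MvPolynomial (Fin 3) ℝ) (α : MvPolynomial (Fin 2) ℝ),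
      Bd (fun m => if m = j.castSucc then n + 1 else n) P ∧
      Bd (fun m => if m = j then n + 1 else n) α ∧
      Bd ![n + 1, n + 1, n] W ∧
      N = DD n P + emb α * X 2 ^ (n + 1) ∧
      (1 + X 2) * pderiv i.castSucc (bu i.castSucc P) =
        W + C (1 / 2) * (1 + X 2) * X 2 ^ n * emb (pderiv i (bu i α))) ?_ ?_ ?_
  · exact ⟨0, 0, 0, Bd.zero, Bd.zero, Bd.zero, by simp [DD, emb_zero], by simp [bu, emb_zero]⟩
  · rintro N N' ⟨P, W, α, h1, h2, h3, h4, h5⟩ ⟨P', W', α', h1', h2', h3', h4', h5'⟩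
    refine ⟨P + P', W + W', α + α', h1.add h1', h2.add h2', h3.add h3', ?_, ?_⟩
    · rw [DD_add, emb_add]; linear_combination h4 + h4'
    · simp only [bu_add, map_add, emb_add]; linear_combination h5 + h5'
  · intro d r hd
    have h0 := hd 0
    have h1 := hd 1
    have h2 := hd 2
    have hj2 : (2 : Fin 3) ≠ j.castSucc := by fin_cases j <;> decide
    rw [if_neg hj2] at h2
    obtain ⟨γ, low, hγ, hl, hl1, hl0, he⟩ := low_exists n (n - d 2) (d 2) (by omega)
    let A : MvPolynomial (Fin 2) ℝ := C r * (X 0 ^ d 0 * X 1 ^ d 1)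
    have hA : Bd (fun m => if m = j then n + 1 else n) A := by
      refine Bd.C_mul ?_ _
      have b0 : Bd ![d 0, 0] (X 0 ^ d 0 : MvPolynomial (Fin 2) ℝ) := Bd.X_pow 0 _ (by simp)
      have b1 : Bd ![0, d 1] (X 1 ^ d 1 : MvPolynomial (Fin 2) ℝ) := Bd.X_pow 1 _ (by simp)
      refine b0.mul b1 ?_
      intro m
      fin_cases j <;> fin_cases m <;> simp at h0 h1 ⊢ <;> omega
    have hM : MvPolynomial.monomial d r = emb A * X 2 ^ d 2 := by
      rw [monomial_eq, Finsupp.prod_fintype _ _ (by simp), Fin.prod_univ_three]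
      simp [A, emb]
      ring
    clear_value A
    have hX : ∀ i : Fin 2, pderiv i.castSucc (X 2 : MvPolynomial (Fin 3) ℝ) = 0 := by
      intro i
      apply pderiv_X_of_ne
      fin_cases i <;> decide
    have hQ0 : pderiv i.castSucc (C (γ / 2) * X 2 ^ n + low) = 0 := by
      simp [hl0, hX]
    refine ⟨(C (γ / 2) * X 2 ^ n + low) * emb A,
      ((1 + X 2) * low) * emb (pderiv i (bu i A)), C γ * A, ?_, hA.C_mul _, ?_, ?_, ?_⟩
    · refine (((Bd.X_pow 2 n (by simp)).C_mul _).add hl).mul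
        (b' := ![if j = 0 then n + 1 else n, if j = 1 then n + 1 else n, 0])
        (hA.emb ?_) ?_
      · intro m; fin_cases j <;> fin_cases m <;> simp
      · intro m; fin_cases j <;> fin_cases m <;> simp
    · refine hl1.mul (b' := ![n + 1, n + 1, 0])
        ((hA.dbu (b' := fun _ => n + 1) i ?_).emb ?_) ?_
      · intro m; fin_cases j <;> fin_cases i <;> fin_cases m <;> simp at hij ⊢
      · intro m; fin_cases m <;> simp
      · intro m; fin_cases m <;> simp
    · rw [hM, DD_mul _ _ _ (emb_pd2 A), he, emb_mul, emb_C]; ring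
    · rw [dbu_mul _ _ _ hQ0, bu_C_mul, pderiv_C_mul, ← emb_bu, emb_pd, emb_mul, emb_C]
      have : (C (γ / 2) : MvPolynomial (Fin 3) ℝ) = C (1 / 2) * C γ := by
        rw [← C_mul]; congr 1; ring
      rw [this]; ring

/-- Splitting off the mean value in the variable `j`. -/
theorem split_mean (n : ℕ) (i j : Fin 2) (hij : i ≠ j) (a : MvPolynomial (Fin 2) ℝ)
    (ha : Bd (fun m => if m = j then n + 1 else n) a) :
    ∃ (g : MvPolynomial (Fin 2) ℝ) (t : Polynomial ℝ),
      Bd (fun _ => n) g ∧ t.natDegree ≤ n ∧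
      a = pderiv j (bu j g) + C 2 * Polynomial.aeval (X i) t := by
  refine ha.induction (M := fun a => ∃ (g : MvPolynomial (Fin 2) ℝ) (t : Polynomial ℝ),
      Bd (fun _ => n) g ∧ t.natDegree ≤ n ∧
      a = pderiv j (bu j g) + C 2 * Polynomial.aeval (X i) t) ?_ ?_ ?_
  · exact ⟨0, 0, Bd.zero, by simp, by simp [bu]⟩
  · rintro a a' ⟨g, t, h1, h2, h3⟩ ⟨g', t', h1', h2', h3'⟩
    refine ⟨g + g', t + t', h1.add h1', Polynomial.natDegree_add_le_of_degree_le h2 h2', ?_⟩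
    simp only [bu_add, map_add]; linear_combination h3 + h3'
  · intro d r hd
    have h1 := hd i
    have h2 := hd j
    simp only [hij, if_true, if_false] at h1 h2
    have hM : MvPolynomial.monomial d r = C r * X i ^ d i * X j ^ d j := by
      rw [monomial_eq, Finsupp.prod_fintype _ _ (by simp), Fin.prod_univ_two]
      fin_cases i <;> fin_cases j <;> simp at hij ⊢ <;> ring
    set b := d j with hb
    have hb1 : ((b : ℝ) + 1) ≠ 0 := by positivity
    have hX : pderiv j (X i : MvPolynomial (Fin 2) ℝ) = 0 := pderiv_X_of_ne hij
    have hgeo : (∑ l ∈ Finset.range b, X j ^ l) * (X j - 1) =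
      (X j ^ b - 1 : MvPolynomial (Fin 2) ℝ) := geom_sum_mul _ _
    refine ⟨C (-r / (b + 1)) * (X i ^ d i * ∑ l ∈ Finset.range b, X j ^ l),
      Polynomial.C (r / (2 * (b + 1))) * Polynomial.X ^ d i, ?_, ?_, ?_⟩
    · refine Bd.C_mul ?_ _
      refine (Bd.X_pow (b := fun m => if m = i then n else 0) i (d i) (by simpa using h1)).mul
        (b' := fun m => if m = i then 0 else n) ?_ ?_
      · refine Finset.sum_induction _ (Bd _) (fun _ _ h h' => h.add h') Bd.zero ?_
        intro l hl
        apply Bd.X_pow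
        simp at hl
        simp [Ne.symm hij]
        omega
      · intro m
        split_ifs <;> simp
    · exact (Polynomial.natDegree_C_mul_X_pow_le _ _).trans h1
    · have e1 : bu j (C (-r / (b + 1)) * (X i ^ d i * ∑ l ∈ Finset.range b, X j ^ l)) =
        C (r / (b + 1)) * X i ^ d i * (X j ^ (b + 1) - X j) := by
        have : (C (-r / (b + 1)) : MvPolynomial (Fin 2) ℝ) = - C (r / (b + 1)) := by
          rw [← C_neg]; congr 1; ring
        rw [bu, this]
        linear_combination C (r / (b + 1)) * X i ^ d i * X j * hgeo
      rw [e1, hM]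
      have e2 : (C r : MvPolynomial (Fin 2) ℝ) = C (r / (b + 1)) * (C (b : ℝ) + 1) := by
        rw [← C_1, ← C_add, ← C_mul]; congr 1; field_simp
      have e3 : (C (r / (b + 1)) : MvPolynomial (Fin 2) ℝ) = C 2 * C (r / (2 * (b + 1))) := by
        rw [← C_mul]; congr 1; field_simp
      simp [hX]
      rw [e2]
      simp
      linear_combination X i ^ d i * e3

theorem hasFDerivAt_evalP {E : Type} [NormedAddCommGroup E] [NormedSpace ℝ E] {ι : Type}
    [Fintype ι] (v : ι → E → ℝ) (v' : ι → E →L[ℝ] ℝ) (q : E)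
    (hv : ∀ i, HasFDerivAt (v i) (v' i) q) (P : MvPolynomial ι ℝ) :
    HasFDerivAt (fun q => eval (fun i => v i q) P)
      (∑ i, eval (fun i => v i q) (pderiv i P) • v' i) q := by
  classical
  induction P using MvPolynomial.induction_on with
  | C a => simpa using hasFDerivAt_const a q
  | add P Q hP hQ =>
    simp only [map_add, add_smul, Finset.sum_add_distrib]
    exact hP.add hQ
  | mul_X P m hP =>
    have h := hP.mul (hv m)
    simp only [map_mul, eval_X]
    refine h.congr_fderiv ?_
    simp only [pderiv_mul, map_add, map_mul, eval_X, add_smul, Finset.sum_add_distrib, pderiv_X]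
    rw [add_comm]
    congr 1
    · rw [Finset.smul_sum]
      refine Finset.sum_congr rfl fun i _ => ?_
      rw [smul_smul, mul_comm]
    · rw [Finset.sum_eq_single m]
      · simp
      · intro b _ hb
        simp [Ne.symm hb]
      · simp

theorem eval_aevalX {ι : Type} (i : ι) (w : ι → ℝ) (t : Polynomial ℝ) :
    eval w (Polynomial.aeval (X i) t) = t.eval (w i) := by
  induction t using Polynomial.induction_on' with
  | add p q hp hq => simp [hp, hq]
  | monomial m c => simp [Polynomial.aeval_monomial, algebraMap_eq]

theorem split_unique (i j : Fin 2) (hij : i ≠ j) (G : MvPolynomial (Fin 2) ℝ) (t : Polynomial ℝ)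
    (h : pderiv j (bu j G) + C 2 * Polynomial.aeval (X i) t = 0) : G = 0 := by
  have hX : pderiv j (X i : MvPolynomial (Fin 2) ℝ) = 0 := pderiv_X_of_ne hij
  have ht : pderiv j (Polynomial.aeval (X i : MvPolynomial (Fin 2) ℝ) t) = 0 := by
    clear h
    induction t using Polynomial.induction_on' with
    | add p q hp hq => simp [hp, hq]
    | monomial m c => simp [hX, Polynomial.aeval_monomial, algebraMap_eq]
  let H : MvPolynomial (Fin 2) ℝ := bu j G + C 2 * Polynomial.aeval (X i) t * X j
  have hH : pderiv j H = 0 := by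
    simp only [H, map_add, pderiv_mul, ht, pderiv_C, pderiv_X_self]
    linear_combination h
  let v : ℝ → Fin 2 → ℝ → ℝ := fun x m y => if m = j then y else x
  have hv : ∀ (x y : ℝ), eval (fun m => v x m y) H = eval (fun m => v x m 0) H := by
    intro x y
    have hd : ∀ y, HasFDerivAt (fun y => eval (fun m => v x m y) H) (0 : ℝ →L[ℝ] ℝ) y := by
      intro y
      have := hasFDerivAt_evalP (v x) (fun m => if m = j then ContinuousLinearMap.id ℝ ℝ else 0) y
        (by
          intro m
          by_cases hm : m = j
          · simp only [v, hm, if_true]; exact hasFDerivAt_id y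
          · simp only [v, hm, if_false]; exact hasFDerivAt_const x y) H
      refine this.congr_fderiv ?_
      refine Finset.sum_eq_zero fun m _ => ?_
      by_cases hm : m = j
      · subst hm; simp [hH]
      · simp [hm]
    exact is_const_of_fderiv_eq_zero (fun y => (hd y).differentiableAt)
      (fun y => (hd y).fderiv) y 0
  have h00 : ∀ x, eval (fun m => v x m 0) H = 0 := by
    intro x; simp [H, bu, v]
  have ht0 : ∀ x, t.eval x = 0 := by
    intro x
    have := hv x 1
    rw [h00] at this
    simpa [H, bu, v, eval_aevalX, hij] using this
  have ht1 : t = 0 := Polynomial.funext (by simpa using ht0)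
  have hb : bu j G = 0 := by
    apply MvPolynomial.funext
    intro w
    have hw : w = fun m => v (w i) m (w j) := by
      ext m
      fin_cases i <;> fin_cases j <;> fin_cases m <;> simp [v] at hij ⊢
    have := hv (w i) (w j)
    rw [h00, ← hw] at this
    simpa [H, ht1] using this
  have hne : (X j * (1 - X j) : MvPolynomial (Fin 2) ℝ) ≠ 0 := by
    intro h0
    have := congrArg (eval (fun _ => (2 : ℝ))) h0
    norm_num at this
  exact (mul_eq_zero.mp hb).resolve_left hne

theorem DD_inj (n : ℕ) (S : MvPolynomial (Fin 3) ℝ) (c : MvPolynomial (Fin 2) ℝ)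
    (hS : degreeOf 2 S ≤ n) (h : DD n S + X 2 ^ (n + 1) * emb c = 0) : S = 0 ∧ c = 0 := by
  have hX0 : (X 2 : MvPolynomial (Fin 3) ℝ) ≠ 0 := X_ne_zero _
  have key : ∀ j ≤ n + 1, (X 2 : MvPolynomial (Fin 3) ℝ) ^ j ∣ S := by
    intro j
    induction j with
    | zero => simp
    | succ j ih =>
      intro hj
      obtain ⟨T, rfl⟩ := ih (by omega)
      obtain ⟨m, rfl⟩ : ∃ m, n = j + m := ⟨n - j, by omega⟩
      rw [pow_succ]
      apply mul_dvd_mul_left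
      have h1 : DD (j + m) (X 2 ^ j * T) =
          X 2 ^ j * (C ((j : ℝ) + 1) * T + X 2 * ((C ((j : ℝ) + 1) - C (((j + m : ℕ) : ℝ) + 3)) * T
            + (1 + X 2) * pderiv 2 T)) := by
        rcases j with _ | j
        · simp [DD]; ring
        · simp [DD]; ring
      rw [h1] at h
      have h2 : X 2 ^ j * (C ((j : ℝ) + 1) * T + X 2 * (((C ((j : ℝ) + 1) - C (((j + m : ℕ) : ℝ) + 3)) * T
            + (1 + X 2) * pderiv 2 T) + X 2 ^ m * emb c)) = 0 := by
        rw [← h]; ring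
      have h3 := (mul_eq_zero.mp h2).resolve_left (pow_ne_zero _ hX0)
      have h4 : (C (1 / ((j : ℝ) + 1)) * C ((j : ℝ) + 1) : MvPolynomial (Fin 3) ℝ) = 1 := by
        rw [← C_mul, ← C_1]; congr 1; field_simp
      refine ⟨- C (1 / ((j : ℝ) + 1)) * (((C ((j : ℝ) + 1) - C (((j + m : ℕ) : ℝ) + 3)) * T
            + (1 + X 2) * pderiv 2 T) + X 2 ^ m * emb c), ?_⟩
      linear_combination C (1 / ((j : ℝ) + 1)) * h3 - T * h4
  have hS0 : S = 0 := by
    obtain ⟨T, rfl⟩ := key (n + 1) le_rfl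
    by_contra hne
    have hT : T ≠ 0 := right_ne_zero_of_mul hne
    rw [degreeOf_mul_eq (pow_ne_zero _ hX0) hT, degreeOf_X_self_pow] at hS
    omega
  refine ⟨hS0, ?_⟩
  rw [hS0] at h
  have h0 : DD n 0 = 0 := by simp [DD]
  rw [h0, zero_add] at h
  have := (mul_eq_zero.mp h).resolve_left (pow_ne_zero _ hX0)
  exact emb_inj (this.trans emb_zero.symm)

theorem core_unique (n : ℕ) (γ : ℝ) (Q : MvPolynomial (Fin 3) ℝ) (hQ : Bd ![0, 0, n] Q)
    (hQe : 1 + X 2 = DD n Q + C γ * X 2 ^ (n + 1))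
    (i j : Fin 2) (hij : i ≠ j) (A : MvPolynomial (Fin 3) ℝ) (hA : degreeOf 2 A ≤ n)
    (R p : MvPolynomial (Fin 2) ℝ) (t : Polynomial ℝ)
    (h : DD n A + (1 + X 2) * emb (pderiv j (bu j R)) +
      X 2 ^ (n + 1) * emb (pderiv j (bu j p) + C 2 * Polynomial.aeval (X i) t) = 0) :
    C γ * R + p = 0 ∧ A = - (Q * emb (pderiv j (bu j R))) := by
  have hz : degreeOf 2 (emb (pderiv j (bu j R))) ≤ 0 := by
    have := (Bd.emb (b := fun m => degreeOf m (pderiv j (bu j R)))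
      (b' := ![degreeOf 0 (pderiv j (bu j R)), degreeOf 1 (pderiv j (bu j R)), 0])
      (p := pderiv j (bu j R)) (fun m => le_rfl) (by intro m; fin_cases m <;> simp)) 2
    simpa using this
  have hS : degreeOf 2 (A + Q * emb (pderiv j (bu j R))) ≤ n := by
    refine (degreeOf_add_le _ _ _).trans (max_le hA ?_)
    refine (degreeOf_mul_le _ _ _).trans ?_
    have := hQ 2
    simp at this
    omega
  have := DD_inj n (A + Q * emb (pderiv j (bu j R)))
    (pderiv j (bu j (C γ * R + p)) + C 2 * Polynomial.aeval (X i) t) hS (by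
      rw [DD_add, DD_mul _ _ _ (emb_pd2 _), bu_add, bu_C_mul, map_add, pderiv_C_mul]
      simp only [emb_add, emb_mul, emb_C] at h ⊢
      linear_combination h - emb (pderiv j (bu j R)) * hQe)
  exact ⟨split_unique i j hij _ t this.2, eq_neg_of_add_eq_zero_left this.1⟩

theorem Qsp_poly (l m n : ℤ) (l' m' n' k : ℕ) (hl : l = l') (hm : m = m') (hn : n = n')
    (f : ℝ × ℝ × ℝ → ℝ) (hf : f ∈ Qsp l m n k) :
    ∃ N : MvPolynomial (Fin 3) ℝ, Bd ![l', m', n'] N ∧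
      ∀ q : ℝ × ℝ × ℝ, f q = eval ![q.1, q.2.1, q.2.2] N / (1 + q.2.2) ^ k := by
  unfold Qsp at hf
  induction hf using Submodule.span_induction with
  | mem f hf =>
    obtain ⟨a, b, c, ha, hb, hc, rfl⟩ := hf
    have b0 : Bd ![a, 0, 0] (X 0 ^ a : MvPolynomial (Fin 3) ℝ) := Bd.X_pow 0 _ (by simp)
    have b1 : Bd ![0, b, 0] (X 1 ^ b : MvPolynomial (Fin 3) ℝ) := Bd.X_pow 1 _ (by simp)
    have b2 : Bd ![0, 0, c] (X 2 ^ c : MvPolynomial (Fin 3) ℝ) := Bd.X_pow 2 _ (by simp)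
    refine ⟨X 0 ^ a * X 1 ^ b * X 2 ^ c, (b0.mul b1 (b'' := ![a, b, 0]) ?_).mul b2 ?_, ?_⟩
    · intro i; fin_cases i <;> simp
    · intro i; fin_cases i <;> simp <;> omega
    · intro q; simp [qmon]
  | zero => exact ⟨0, Bd.zero, by simp⟩
  | add f g _ _ hf hg =>
    obtain ⟨N, h1, h2⟩ := hf
    obtain ⟨N', h1', h2'⟩ := hg
    exact ⟨N + N', h1.add h1', fun q => by simp [h2, h2', add_div]⟩
  | smul c f _ hf =>
    obtain ⟨N, h1, h2⟩ := hf
    exact ⟨C c * N, h1.C_mul c, fun q => by simp [h2, mul_div_assoc]⟩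

theorem poly_Qsp (l m n : ℤ) (l' m' n' k : ℕ) (hl : l = l') (hm : m = m') (hn : n = n')
    (N : MvPolynomial (Fin 3) ℝ) (hN : Bd ![l', m', n'] N) :
    (fun q : ℝ × ℝ × ℝ => eval ![q.1, q.2.1, q.2.2] N / (1 + q.2.2) ^ k) ∈ Qsp l m n k := by
  refine hN.induction (M := fun N => (fun q : ℝ × ℝ × ℝ => eval ![q.1, q.2.1, q.2.2] N /
    (1 + q.2.2) ^ k) ∈ Qsp l m n k) ?_ ?_ ?_
  · simp only [map_zero, zero_div]; exact Submodule.zero_mem _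
  · intro N N' h h'
    simp only [map_add, add_div]; exact Submodule.add_mem _ h h'
  · intro d r hd
    have h0 := hd 0
    have h1 := hd 1
    have h2 := hd 2
    simp at h0 h1 h2
    have : (fun q : ℝ × ℝ × ℝ => eval ![q.1, q.2.1, q.2.2] (MvPolynomial.monomial d r) /
        (1 + q.2.2) ^ k) = r • qmon k (d 0) (d 1) (d 2) := by
      ext q
      rw [eval_monomial, Finsupp.prod_fintype _ _ (by simp), Fin.prod_univ_three]
      simp [qmon]; ring
    rw [this]
    refine Submodule.smul_mem _ _ (Submodule.subset_span ⟨_, _, _, ?_, ?_, ?_, rfl⟩) <;> omega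

theorem pd_eval (N : MvPolynomial (Fin 3) ℝ) (m : ℕ) (f : ℝ × ℝ × ℝ → ℝ)
    (hf : f = fun q => eval ![q.1, q.2.1, q.2.2] N / (1 + q.2.2) ^ m)
    (q : ℝ × ℝ × ℝ) (hq : 1 + q.2.2 ≠ 0) :
    pdx f q = eval ![q.1, q.2.1, q.2.2] (pderiv 0 N) / (1 + q.2.2) ^ m ∧
    pdy f q = eval ![q.1, q.2.1, q.2.2] (pderiv 1 N) / (1 + q.2.2) ^ m ∧
    pdz f q = ((1 + q.2.2) * eval ![q.1, q.2.1, q.2.2] (pderiv 2 N)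
      - m * eval ![q.1, q.2.1, q.2.2] N) / (1 + q.2.2) ^ (m + 1) := by
  let px : ℝ × ℝ × ℝ →L[ℝ] ℝ := ContinuousLinearMap.fst ℝ ℝ (ℝ × ℝ)
  let py : ℝ × ℝ × ℝ →L[ℝ] ℝ :=
    (ContinuousLinearMap.fst ℝ ℝ ℝ).comp (ContinuousLinearMap.snd ℝ ℝ (ℝ × ℝ))
  let pz : ℝ × ℝ × ℝ →L[ℝ] ℝ :=
    (ContinuousLinearMap.snd ℝ ℝ ℝ).comp (ContinuousLinearMap.snd ℝ ℝ (ℝ × ℝ))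
  have hx : HasFDerivAt (fun q : ℝ × ℝ × ℝ => q.1) px q := px.hasFDerivAt
  have hy : HasFDerivAt (fun q : ℝ × ℝ × ℝ => q.2.1) py q := py.hasFDerivAt
  have hz : HasFDerivAt (fun q : ℝ × ℝ × ℝ => q.2.2) pz q := pz.hasFDerivAt
  have h1 := hasFDerivAt_evalP ![fun q : ℝ × ℝ × ℝ => q.1, fun q => q.2.1, fun q => q.2.2]
    ![px, py, pz] q (by intro i; fin_cases i <;> assumption) N
  have hvec : ∀ q : ℝ × ℝ × ℝ, (fun i => (![fun q : ℝ × ℝ × ℝ => q.1, fun q => q.2.1,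
      fun q => q.2.2] : Fin 3 → ℝ × ℝ × ℝ → ℝ) i q) = ![q.1, q.2.1, q.2.2] := by
    intro q; ext i; fin_cases i <;> rfl
  simp only [hvec, Fin.sum_univ_three] at h1
  have h2 : HasFDerivAt (fun q : ℝ × ℝ × ℝ => ((1 + q.2.2) ^ m)⁻¹)
      ((-(m : ℝ) / (1 + q.2.2) ^ (m + 1)) • pz) q := by
    have hd : HasDerivAt (fun z : ℝ => ((1 + z) ^ m)⁻¹) (-(m : ℝ) / (1 + q.2.2) ^ (m + 1)) q.2.2 := by
      have := (((hasDerivAt_id q.2.2).const_add 1).pow m).inv (pow_ne_zero _ hq)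
      refine this.congr_deriv ?_
      simp only [id, Pi.pow_apply]
      rcases m with _ | m
      · simp
      · rw [Nat.add_sub_cancel]; field_simp; ring
    have h := HasDerivAt.comp_hasFDerivAt (𝕜 := ℝ) (f := fun q : ℝ × ℝ × ℝ => q.2.2) q hd hz
    exact h
  have h3 := h1.mul h2
  have hff : f = (fun q : ℝ × ℝ × ℝ => eval ![q.1, q.2.1, q.2.2] N) *
      fun q : ℝ × ℝ × ℝ => ((1 + q.2.2) ^ m)⁻¹ := by
    rw [hf]; rfl
  have h4 := h3
  rw [← hff] at h4
  have hp : (1 + q.2.2) ^ m ≠ 0 := pow_ne_zero _ hq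
  refine ⟨?_, ?_, ?_⟩
  · rw [pdx, h4.fderiv]
    simp [px, py, pz]; field_simp
  · rw [pdy, h4.fderiv]
    simp [px, py, pz]; field_simp
  · rw [pdz, h4.fderiv]
    simp [px, py, pz]; field_simp; ring

theorem curl_formula (n : ℕ) (p₁ p₂ : MvPolynomial (Fin 3) ℝ) (ρ : MvPolynomial (Fin 2) ℝ)
    (q : ℝ × ℝ × ℝ) (hq : 1 + q.2.2 ≠ 0) :
    curl3 (U1curlFun (n + 2) p₁ p₂ ρ) q =
      (q.1 * (1 - q.1) * ((1 + q.2.2) * eval ![q.1, q.2.1] (pderiv 1 (bu 1 ρ))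
          - eval ![q.1, q.2.1, q.2.2] (DD n p₂)) / (1 + q.2.2) ^ (n + 4),
       q.2.1 * (1 - q.2.1) * (eval ![q.1, q.2.1, q.2.2] (DD n p₁)
          - (1 + q.2.2) * eval ![q.1, q.2.1] (pderiv 0 (bu 0 ρ))) / (1 + q.2.2) ^ (n + 4),
       q.2.2 * (1 + q.2.2) * (eval ![q.1, q.2.1, q.2.2] (pderiv 0 (bu 0 p₂))
          - eval ![q.1, q.2.1, q.2.2] (pderiv 1 (bu 1 p₁))) / (1 + q.2.2) ^ (n + 4)) := by
  obtain ⟨ax, ay, az⟩ := pd_eval (X 2 * bu 1 p₁) (n + 3)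
    (fun q => (U1curlFun (n + 2) p₁ p₂ ρ q).1)
    (by ext q; simp [U1curlFun, bu]; ring) q hq
  obtain ⟨bx, b_y, bz⟩ := pd_eval (X 2 * bu 0 p₂) (n + 3)
    (fun q => (U1curlFun (n + 2) p₁ p₂ ρ q).2.1)
    (by ext q; simp [U1curlFun, bu]; ring) q hq
  obtain ⟨cx, cy, -⟩ := pd_eval (emb (bu 0 (bu 1 ρ))) (n + 3)
    (fun q => (U1curlFun (n + 2) p₁ p₂ ρ q).2.2)
    (by ext q; simp [U1curlFun, bu, emb_eval]; ring) q hq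
  have e0 : pderiv 0 (emb (bu 0 (bu 1 ρ))) = emb (X 1 * (1 - X 1) * pderiv 0 (bu 0 ρ)) := by
    have := emb_pd 0 (bu 0 (bu 1 ρ))
    rw [Fin.castSucc_zero] at this
    rw [this]
    congr 1
    have : bu 0 (bu 1 ρ) = X 1 * (1 - X 1) * bu 0 ρ := by unfold bu; ring
    rw [this, pderiv_mul]
    simp [pderiv_X]
  have e1 : pderiv 1 (emb (bu 0 (bu 1 ρ))) = emb (X 0 * (1 - X 0) * pderiv 1 (bu 1 ρ)) := by
    have := emb_pd 1 (bu 0 (bu 1 ρ))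
    rw [Fin.castSucc_one] at this
    rw [this]
    congr 1
    have : bu 0 (bu 1 ρ) = X 0 * (1 - X 0) * bu 1 ρ := by unfold bu; ring
    rw [this, pderiv_mul]
    simp [pderiv_X]
  have f0 : pderiv 0 (X 2 * bu 0 p₂) = X 2 * pderiv 0 (bu 0 p₂) := by
    rw [pderiv_mul]; simp [pderiv_X]
  have f1 : pderiv 1 (X 2 * bu 1 p₁) = X 2 * pderiv 1 (bu 1 p₁) := by
    rw [pderiv_mul]; simp [pderiv_X]
  have g2 : pderiv 2 (X 2 * bu 0 p₂) = X 0 * (1 - X 0) * (p₂ + X 2 * pderiv 2 p₂) := by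
    simp [bu, pderiv_X]; ring
  have g1 : pderiv 2 (X 2 * bu 1 p₁) = X 1 * (1 - X 1) * (p₁ + X 2 * pderiv 2 p₁) := by
    simp [bu, pderiv_X]; ring
  rw [curl3, ay, az, bx, bz, cx, cy, e0, e1, f0, f1, g1, g2]
  simp only [emb_eval]
  have hp : (1 + q.2.2) ^ (n + 3) ≠ 0 := pow_ne_zero _ hq
  refine Prod.ext ?_ (Prod.ext ?_ ?_)
  · simp [DD, bu]; field_simp; ring
  · simp [DD, bu]; field_simp; ring
  · simp only [map_mul, eval_X]
    have e : (1 + q.2.2) ^ (n + 4) = (1 + q.2.2) ^ (n + 3) * (1 + q.2.2) := pow_succ _ _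
    rw [e]
    simp; field_simp

theorem bub2_d0 (ρ : MvPolynomial (Fin 2) ℝ) :
    pderiv 0 (bub2 ρ) = X 1 * (1 - X 1) * pderiv 0 (bu 0 ρ) := by
  have : bub2 ρ = X 1 * (1 - X 1) * bu 0 ρ := by unfold bub2 bu; ring
  rw [this, pderiv_mul]
  simp [pderiv_X]

theorem bub2_d1 (ρ : MvPolynomial (Fin 2) ℝ) :
    pderiv 1 (bub2 ρ) = X 0 * (1 - X 0) * pderiv 1 (bu 1 ρ) := by
  have : bub2 ρ = X 0 * (1 - X 0) * bu 1 ρ := by unfold bub2 bu; ring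
  rw [this, pderiv_mul]
  simp [pderiv_X]

theorem dbu_comm (ρ : MvPolynomial (Fin 2) ℝ) :
    pderiv 1 (bu 1 (pderiv 0 (bu 0 ρ))) = pderiv 0 (bu 0 (pderiv 1 (bu 1 ρ))) := by
  have h0 := bub2_d0 ρ
  have h1 := bub2_d1 ρ
  change pderiv 1 (X 1 * (1 - X 1) * pderiv 0 (bu 0 ρ)) =
    pderiv 0 (X 0 * (1 - X 0) * pderiv 1 (bu 1 ρ))
  rw [← h0, ← h1, pderiv_comm']

theorem dbu_aeval (i : Fin 2) (t : Polynomial ℝ) :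
    pderiv i (bu i (Polynomial.aeval (X i) t)) =
      Polynomial.aeval (X i) (Polynomial.derivative (bub1 t)) := by
  have h : ∀ t : Polynomial ℝ, pderiv i (Polynomial.aeval (X i : MvPolynomial (Fin 2) ℝ) t) =
      Polynomial.aeval (X i) (Polynomial.derivative t) := by
    intro t
    induction t using Polynomial.induction_on' with
    | add p q hp hq => simp [hp, hq]
    | monomial m c =>
      simp [Polynomial.aeval_monomial, algebraMap_eq, Polynomial.derivative_monomial]
      ring
  rw [← h]
  simp [bub1, bu]

theorem U2zero_formula (n : ℕ) (σ τ : MvPolynomial (Fin 2) ℝ) (χ₁ χ₂ χ₃ : ℝ × ℝ × ℝ → ℝ)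
    (q : ℝ × ℝ × ℝ) :
    U2zeroFun (n + 2) σ τ χ₁ χ₂ χ₃ q =
      (q.1 * (1 - q.1) * (q.2.2 ^ (n + 1) / (1 + q.2.2) ^ (n + 4) *
          (2 * eval ![q.1, q.2.1] τ) + χ₁ q),
       q.2.1 * (1 - q.2.1) * (q.2.2 ^ (n + 1) / (1 + q.2.2) ^ (n + 4) *
          (2 * eval ![q.1, q.2.1] σ) + χ₂ q),
       q.2.2 ^ (n + 1) / (1 + q.2.2) ^ (n + 4) * ((1 + q.2.2) *
          (eval ![q.1, q.2.1] (pderiv 1 (bu 1 σ)) + eval ![q.1, q.2.1] (pderiv 0 (bu 0 τ))))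
          + q.2.2 * χ₃ q) := by
  have e : n + 2 - 1 = n + 1 := rfl
  unfold U2zeroFun
  rw [e]
  refine Prod.ext ?_ (Prod.ext ?_ ?_)
  · simp; ring
  · simp; ring
  · rfl

theorem U2div_formula (n : ℕ) (p : MvPolynomial (Fin 2) ℝ) (t s : Polynomial ℝ)
    (χ : ℝ × ℝ × ℝ → ℝ) (q : ℝ × ℝ × ℝ) :
    U2divFun (n + 2) p t s χ q =
      (q.1 * (1 - q.1) * (q.2.2 ^ (n + 1) / (1 + q.2.2) ^ (n + 4) *
          (eval ![q.1, q.2.1] (pderiv 1 (bu 1 p)) + 2 * t.eval q.1)),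
       q.2.1 * (1 - q.2.1) * (q.2.2 ^ (n + 1) / (1 + q.2.2) ^ (n + 4) *
          (eval ![q.1, q.2.1] (pderiv 0 (bu 0 p)) + 2 * s.eval q.2.1)),
       q.2.2 ^ (n + 1) / (1 + q.2.2) ^ (n + 4) * ((1 + q.2.2) *
          (eval ![q.1, q.2.1] (pderiv 0 (bu 0 (pderiv 1 (bu 1 p)))) +
            (Polynomial.derivative (bub1 s)).eval q.2.1 +
            (Polynomial.derivative (bub1 t)).eval q.1))
          + q.2.2 * χ q) := by
  have e : n + 2 - 1 = n + 1 := rfl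
  unfold U2divFun
  rw [e, bub2_d0, bub2_d1]
  refine Prod.ext ?_ (Prod.ext ?_ ?_)
  · simp [bub1]; ring
  · simp [bub1]; ring
  · rfl

theorem bd_of2 {p : MvPolynomial (Fin 2) ℝ} {a b : ℤ} {a' b' : ℕ} (ha : a = a') (hb : b = b') :
    (∀ d ∈ p.support, (d 0 : ℤ) ≤ a ∧ (d 1 : ℤ) ≤ b) ↔ Bd ![a', b'] p := by
  subst ha hb
  constructor
  · intro h i
    rw [degreeOf_le_iff]
    intro d hd
    have := h d hd
    fin_cases i <;> simp <;> omega
  · intro h d hd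
    have h0 := degreeOf_le_iff.mp (h 0) d hd
    have h1 := degreeOf_le_iff.mp (h 1) d hd
    simp at h0 h1
    omega

theorem bd_of3 {p : MvPolynomial (Fin 3) ℝ} {a b c : ℤ} {a' b' c' : ℕ}
    (ha : a = a') (hb : b = b') (hc : c = c') :
    (∀ d ∈ p.support, (d 0 : ℤ) ≤ a ∧ (d 1 : ℤ) ≤ b ∧ (d 2 : ℤ) ≤ c) ↔ Bd ![a', b', c'] p := by
  subst ha hb hc
  constructor
  · intro h i
    rw [degreeOf_le_iff]
    intro d hd
    have := h d hd
    fin_cases i <;> simp <;> omega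
  · intro h d hd
    have h0 := degreeOf_le_iff.mp (h 0) d hd
    have h1 := degreeOf_le_iff.mp (h 1) d hd
    have h2 := degreeOf_le_iff.mp (h 2) d hd
    simp at h0 h1 h2
    omega

theorem exist_n (n : ℕ) (σ τ : MvPolynomial (Fin 2) ℝ)
    (hσ : Bd ![n + 1, n] σ) (hτ : Bd ![n, n + 1] τ)
    (χ₁ χ₂ χ₃ : (ℝ × ℝ × ℝ) → ℝ) (N₁ N₂ : MvPolynomial (Fin 3) ℝ)
    (hN₁ : Bd ![n, n + 1, n] N₁) (hN₂ : Bd ![n + 1, n, n] N₂)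
    (h₁ : ∀ q : ℝ × ℝ × ℝ, χ₁ q = eval ![q.1, q.2.1, q.2.2] N₁ / (1 + q.2.2) ^ (n + 4))
    (h₂ : ∀ q : ℝ × ℝ × ℝ, χ₂ q = eval ![q.1, q.2.1, q.2.2] N₂ / (1 + q.2.2) ^ (n + 4)) :
    ∃ p₁ p₂ : MvPolynomial (Fin 3) ℝ, ∃ ρ : MvPolynomial (Fin 2) ℝ,
     ∃ p : MvPolynomial (Fin 2) ℝ, ∃ t s : Polynomial ℝ, ∃ W : MvPolynomial (Fin 3) ℝ,
       Bd ![n + 1, n, n] p₁ ∧ Bd ![n, n + 1, n] p₂ ∧ Bd ![n, n] ρ ∧ Bd ![n, n] p ∧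
       t.natDegree ≤ n ∧ s.natDegree ≤ n ∧ Bd ![n + 1, n + 1, n] W ∧
       ∀ q ∈ PyrInfInt,
         U2zeroFun (n + 2) σ τ χ₁ χ₂ χ₃ q =
           curl3 (U1curlFun (n + 2) p₁ p₂ ρ) q + U2divFun (n + 2) p t s
            (χ₃ + fun q => eval ![q.1, q.2.1, q.2.2] W / (1 + q.2.2) ^ (n + 4)) q := by
  obtain ⟨γ, Q, hγ, hQ, hQ0, hQe⟩ := Q_exists n
  obtain ⟨P₂, W₂, α, hP₂, hα, hW₂, eN₁, eW₂⟩ := red n 0 1 (by decide) N₁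
    (hN₁.mono (by intro m; fin_cases m <;> simp))
  obtain ⟨P₁, W₁, β, hP₁, hβ, hW₁, eN₂, eW₁⟩ := red n 1 0 (by decide) N₂
    (hN₂.mono (by intro m; fin_cases m <;> simp))
  obtain ⟨g, t, hg, ht, ea⟩ := split_mean n 0 1 (by decide) (C 2 * τ + α)
    (((hτ.mono (by intro m; fin_cases m <;> simp)).C_mul 2).add hα)
  obtain ⟨h, s, hh, hs, eb⟩ := split_mean n 1 0 (by decide) (C 2 * σ + β)
    (((hσ.mono (by intro m; fin_cases m <;> simp)).C_mul 2).add hβ)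
  rw [Fin.castSucc_zero] at eW₂
  rw [Fin.castSucc_one] at eW₁
  have ea' := congrArg (fun r => pderiv 0 (bu 0 r)) ea
  have eb' := congrArg (fun r => pderiv 1 (bu 1 r)) eb
  simp only [bu_add, bu_C_mul, map_add, pderiv_C_mul, dbu_aeval] at ea' eb'
  rw [dbu_comm] at eb'
  have hρ : Bd (fun _ => n) (C (1 / (2 * γ)) * (g - h)) := (hg.sub hh).C_mul _
  have hp : Bd (fun _ => n) (C (1 / 2) * (g + h)) := (hg.add hh).C_mul _
  obtain ⟨ρ, rfl⟩ : ∃ ρ, ρ = C (1 / (2 * γ)) * (g - h) := ⟨_, rfl⟩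
  have hQ00 : pderiv 0 Q = 0 := hQ0 0
  have hQ01 : pderiv 1 Q = 0 := hQ0 1
  refine ⟨P₁ + Q * emb (pderiv 0 (bu 0 (C (1 / (2 * γ)) * (g - h)))),
    -P₂ + Q * emb (pderiv 1 (bu 1 (C (1 / (2 * γ)) * (g - h)))), C (1 / (2 * γ)) * (g - h),
    C (1 / 2) * (g + h), t, s, W₂ + W₁, ?_, ?_, ?_, ?_, ht, hs, hW₂.add hW₁, ?_⟩
  · refine (hP₁.mono (by intro m; fin_cases m <;> simp)).add ?_
    refine hQ.mul (b' := ![n + 1, n, 0]) ((hρ.dbu (b' := ![n + 1, n]) 0 ?_).emb ?_) ?_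
    all_goals intro m; fin_cases m <;> simp
  · refine (hP₂.mono (by intro m; fin_cases m <;> simp)).neg.add ?_
    refine hQ.mul (b' := ![n, n + 1, 0]) ((hρ.dbu (b' := ![n, n + 1]) 1 ?_).emb ?_) ?_
    all_goals intro m; fin_cases m <;> simp
  · exact hρ.mono (by intro m; fin_cases m <;> simp)
  · exact hp.mono (by intro m; fin_cases m <;> simp)
  · rintro ⟨x, y, z⟩ ⟨-, -, -, -, hz⟩
    simp only at hz
    have hw : 1 + z ≠ 0 := by positivity
    have k0 : ∀ r : MvPolynomial (Fin 2) ℝ, pderiv 0 (bu 0 (Q * emb r)) =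
        Q * emb (pderiv 0 (bu 0 r)) := by
      intro r
      rw [dbu_mul _ _ _ hQ00]
      have := emb_pd 0 (bu 0 r)
      rw [emb_bu] at this
      rw [← this]; rfl
    have k1 : ∀ r : MvPolynomial (Fin 2) ℝ, pderiv 1 (bu 1 (Q * emb r)) =
        Q * emb (pderiv 1 (bu 1 r)) := by
      intro r
      rw [dbu_mul _ _ _ hQ01]
      have := emb_pd 1 (bu 1 r)
      rw [emb_bu] at this
      rw [← this]; rfl
    rw [curl_formula _ _ _ _ _ hw, U2zero_formula, U2div_formula, h₁, h₂]
    simp only [DD_add, DD_neg, DD_mul _ _ _ (emb_pd2 _), bu_add, bu_neg, bu_sub, bu_C_mul,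
      map_add, map_neg, map_sub, k0, k1, dbu_comm, pderiv_C_mul, map_mul, emb_eval, eval_C,
      Pi.add_apply]
    replace hQe := congrArg (eval ![x, y, z]) hQe
    replace eN₁ := congrArg (eval ![x, y, z]) eN₁
    replace eN₂ := congrArg (eval ![x, y, z]) eN₂
    replace eW₁ := congrArg (eval ![x, y, z]) eW₁
    replace eW₂ := congrArg (eval ![x, y, z]) eW₂
    replace ea := congrArg (eval ![x, y]) ea
    replace eb := congrArg (eval ![x, y]) eb
    replace ea' := congrArg (eval ![x, y]) ea'
    replace eb' := congrArg (eval ![x, y]) eb'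
    simp only [map_add, map_mul, map_one, map_pow, emb_eval, eval_C, eval_X, eval_aevalX]
      at hQe eN₁ eN₂ eW₁ eW₂ ea eb ea' eb'
    have v2 : (![x, y, z] : Fin 3 → ℝ) 2 = z := rfl
    have u0 : (![x, y] : Fin 2 → ℝ) 0 = x := rfl
    have u1 : (![x, y] : Fin 2 → ℝ) 1 = y := rfl
    simp only [v2, u0, u1] at hQe eN₁ eN₂ eW₁ eW₂ ea eb ea' eb'
    have hg2 : 1 / (2 * γ) * γ = 1 / 2 := by field_simp
    simp only [Prod.mk_add_mk, div_eq_mul_inv _ ((1 + z) ^ (n + 4))]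
    generalize ((1 + z) ^ (n + 4))⁻¹ = iw
    refine Prod.ext ?_ (Prod.ext ?_ ?_)
    · simp only
      linear_combination x * (1 - x) * iw * (z ^ (n + 1) * ea + eN₁ -
        (1 / (2 * γ) * (eval ![x, y] (pderiv 1 (bu 1 g)) - eval ![x, y] (pderiv 1 (bu 1 h)))) * hQe
        - z ^ (n + 1) * (eval ![x, y] (pderiv 1 (bu 1 g)) - eval ![x, y] (pderiv 1 (bu 1 h))) * hg2)
    · simp only
      linear_combination y * (1 - y) * iw * (z ^ (n + 1) * eb + eN₂ +
        (1 / (2 * γ) * (eval ![x, y] (pderiv 0 (bu 0 g)) - eval ![x, y] (pderiv 0 (bu 0 h)))) * hQe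
        + z ^ (n + 1) * (eval ![x, y] (pderiv 0 (bu 0 g)) - eval ![x, y] (pderiv 0 (bu 0 h))) * hg2)
    · simp only
      linear_combination iw * (z ^ (n + 1) * (1 + z) * (1 / 2) * (ea' + eb') + z * eW₁ + z * eW₂)

theorem unique_n (n : ℕ) (p₁ p₂ p₁' p₂' : MvPolynomial (Fin 3) ℝ)
    (ρ ρ' p p' : MvPolynomial (Fin 2) ℝ) (t s t' s' : Polynomial ℝ) (χ χ' : (ℝ × ℝ × ℝ) → ℝ)
    (hp₁ : degreeOf 2 p₁ ≤ n) (hp₂ : degreeOf 2 p₂ ≤ n)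
    (hp₁' : degreeOf 2 p₁' ≤ n) (hp₂' : degreeOf 2 p₂' ≤ n)
    (h : ∀ q ∈ PyrInfInt, curl3 (U1curlFun (n + 2) p₁ p₂ ρ) q + U2divFun (n + 2) p t s χ q =
      curl3 (U1curlFun (n + 2) p₁' p₂' ρ') q + U2divFun (n + 2) p' t' s' χ' q) :
    p₁ = p₁' ∧ p₂ = p₂' ∧ ρ = ρ' := by
  obtain ⟨γ, Q, hγ, hQ, hQ0, hQe⟩ := Q_exists n
  have hset : ∀ i, (![Set.Ioo 0 1, Set.Ioo 0 1, Set.Ioi 0] : Fin 3 → Set ℝ) i |>.Infinite := by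
    intro i
    fin_cases i
    · exact Set.Ioo_infinite one_pos
    · exact Set.Ioo_infinite one_pos
    · exact Set.Ioi_infinite 0
  have hpt : ∀ w ∈ Set.pi Set.univ (![Set.Ioo 0 1, Set.Ioo 0 1, Set.Ioi 0] : Fin 3 → Set ℝ),
      ∃ x y z : ℝ, w = ![x, y, z] ∧ 0 < x ∧ x < 1 ∧ 0 < y ∧ y < 1 ∧ 0 < z := by
    intro w hw
    have h0 := hw 0 trivial
    have h1 := hw 1 trivial
    have h2 := hw 2 trivial
    refine ⟨w 0, w 1, w 2, ?_, h0.1, h0.2, h1.1, h1.2, h2⟩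
    ext i; fin_cases i <;> rfl
  have a1 := core_unique n γ Q hQ hQe 0 1 (by decide) (-(p₂ - p₂'))
    (by rw [degreeOf_neg]; exact (degreeOf_sub_le _ _ _).trans (max_le hp₂ hp₂'))
    (ρ - ρ') (p - p') (t - t') (by
      apply MvPolynomial.funext_set _ hset
      intro w hw
      obtain ⟨x, y, z, rfl, hx0, hx1, hy0, hy1, hz⟩ := hpt w hw
      have hw : 1 + z ≠ 0 := by positivity
      have e := congrArg Prod.fst (h (x, y, z) ⟨hx0, hx1, hy0, hy1, hz⟩)
      rw [curl_formula _ _ _ _ _ hw, curl_formula _ _ _ _ _ hw, U2div_formula, U2div_formula] at e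
      simp only [Prod.mk_add_mk, div_eq_mul_inv] at e
      have hne : x * (1 - x) * ((1 + z) ^ (n + 4))⁻¹ ≠ 0 :=
        mul_ne_zero (mul_ne_zero hx0.ne' (by linarith)) (inv_ne_zero (pow_ne_zero _ hw))
      simp only [sub_eq_add_neg p₂, DD_neg, DD_add, bu_sub, map_sub, map_add, map_neg, map_mul,
        emb_eval, eval_C, eval_aevalX, map_zero, map_one, map_pow, eval_X]
      have v2 : (![x, y, z] : Fin 3 → ℝ) 2 = z := rfl
      have u0 : (![x, y] : Fin 2 → ℝ) 0 = x := rfl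
      simp only [v2, u0]
      apply mul_left_cancel₀ hne
      generalize ((1 + z) ^ (n + 4))⁻¹ = iw at e
      linear_combination e)
  have a2 := core_unique n γ Q hQ hQe 1 0 (by decide) (p₁ - p₁')
    ((degreeOf_sub_le _ _ _).trans (max_le hp₁ hp₁'))
    (-(ρ - ρ')) (p - p') (s - s') (by
      apply MvPolynomial.funext_set _ hset
      intro w hw
      obtain ⟨x, y, z, rfl, hx0, hx1, hy0, hy1, hz⟩ := hpt w hw
      have hw : 1 + z ≠ 0 := by positivity
      have e := congrArg (fun r => r.2.1) (h (x, y, z) ⟨hx0, hx1, hy0, hy1, hz⟩)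
      rw [curl_formula _ _ _ _ _ hw, curl_formula _ _ _ _ _ hw, U2div_formula, U2div_formula] at e
      simp only [Prod.mk_add_mk, div_eq_mul_inv] at e
      have hne : y * (1 - y) * ((1 + z) ^ (n + 4))⁻¹ ≠ 0 :=
        mul_ne_zero (mul_ne_zero hy0.ne' (by linarith)) (inv_ne_zero (pow_ne_zero _ hw))
      simp only [sub_eq_add_neg p₁, DD_neg, DD_add, bu_sub, bu_neg, map_sub, map_add, map_neg,
        map_mul, emb_eval, eval_C, eval_aevalX, map_zero, map_one, map_pow, eval_X]
      have v2 : (![x, y, z] : Fin 3 → ℝ) 2 = z := rfl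
      have u1 : (![x, y] : Fin 2 → ℝ) 1 = y := rfl
      simp only [v2, u1]
      apply mul_left_cancel₀ hne
      generalize ((1 + z) ^ (n + 4))⁻¹ = iw at e
      linear_combination e)
  have hR : ρ - ρ' = 0 := by
    have e : C (2 * γ) * (ρ - ρ') = 0 := by
      have h2 : (C 2 : MvPolynomial (Fin 2) ℝ) = 2 := map_ofNat C 2
      rw [C_mul, h2]
      linear_combination a1.1 - a2.1
    refine (mul_eq_zero.mp e).resolve_left ?_
    exact fun hc => (by positivity : (2 * γ) ≠ 0) (C_eq_zero.mp hc)
  have e1 := a1.2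
  have e2 := a2.2
  rw [hR] at e1 e2
  simp [bu, emb_zero] at e1 e2
  exact ⟨sub_eq_zero.mp e2, (sub_eq_zero.mp e1).symm, sub_eq_zero.mp hR⟩

/-- every `u ∈ U^{(2),k}_0(Ω∞)` can be written, uniquely, as
`u = curl w₁ + w₂` on `Ω∞°` with `w₁ ∈ U^{(1),k}_{0,curl}(Ω∞)` and
`w₂ ∈ U^{(2),k}_{0,div}(Ω∞)`. -/
theorem U2zero_decomposition (k : ℕ) (hk : 1 ≤ k)
    (σ τ : MvPolynomial (Fin 2) ℝ)
    (hσ : ∀ d ∈ σ.support, (d 0 : ℤ) ≤ (k : ℤ) - 1 ∧ (d 1 : ℤ) ≤ (k : ℤ) - 2)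
    (hτ : ∀ d ∈ τ.support, (d 0 : ℤ) ≤ (k : ℤ) - 2 ∧ (d 1 : ℤ) ≤ (k : ℤ) - 1)
    (χ₁ χ₂ χ₃ : (ℝ × ℝ × ℝ) → ℝ)
    (hχ₁ : χ₁ ∈ Qsp ((k : ℤ) - 2) ((k : ℤ) - 1) ((k : ℤ) - 2) (k + 2))
    (hχ₂ : χ₂ ∈ Qsp ((k : ℤ) - 1) ((k : ℤ) - 2) ((k : ℤ) - 2) (k + 2))
    (hχ₃ : χ₃ ∈ Qsp ((k : ℤ) - 1) ((k : ℤ) - 1) ((k : ℤ) - 2) (k + 2)) :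
    (∃ p₁ p₂ : MvPolynomial (Fin 3) ℝ, ∃ ρ : MvPolynomial (Fin 2) ℝ,
     ∃ p : MvPolynomial (Fin 2) ℝ, ∃ t s : Polynomial ℝ, ∃ χ : (ℝ × ℝ × ℝ) → ℝ,
       U1curlBounds k p₁ p₂ ρ ∧ U2divBounds k p t s ∧
       χ ∈ Qsp ((k : ℤ) - 1) ((k : ℤ) - 1) ((k : ℤ) - 2) (k + 2) ∧
       ∀ q ∈ PyrInfInt,
         U2zeroFun k σ τ χ₁ χ₂ χ₃ q =
           curl3 (U1curlFun k p₁ p₂ ρ) q + U2divFun k p t s χ q) ∧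
    (∀ p₁ p₂ p₁' p₂' : MvPolynomial (Fin 3) ℝ, ∀ ρ ρ' : MvPolynomial (Fin 2) ℝ,
     ∀ p p' : MvPolynomial (Fin 2) ℝ, ∀ t s t' s' : Polynomial ℝ,
     ∀ χ χ' : (ℝ × ℝ × ℝ) → ℝ,
       U1curlBounds k p₁ p₂ ρ → U1curlBounds k p₁' p₂' ρ' →
       U2divBounds k p t s → U2divBounds k p' t' s' →
       χ ∈ Qsp ((k : ℤ) - 1) ((k : ℤ) - 1) ((k : ℤ) - 2) (k + 2) →
       χ' ∈ Qsp ((k : ℤ) - 1) ((k : ℤ) - 1) ((k : ℤ) - 2) (k + 2) →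
       (∀ q ∈ PyrInfInt,
         U2zeroFun k σ τ χ₁ χ₂ χ₃ q =
           curl3 (U1curlFun k p₁ p₂ ρ) q + U2divFun k p t s χ q) →
       (∀ q ∈ PyrInfInt,
         U2zeroFun k σ τ χ₁ χ₂ χ₃ q =
           curl3 (U1curlFun k p₁' p₂' ρ') q + U2divFun k p' t' s' χ' q) →
       ∀ q ∈ PyrInfInt,
         U1curlFun k p₁ p₂ ρ q = U1curlFun k p₁' p₂' ρ' q ∧
         U2divFun k p t s χ q = U2divFun k p' t' s' χ' q) := by
  have hsupp : ∀ {ι : Type} {r : MvPolynomial ι ℝ}, (∀ d ∈ r.support, False) → r = 0 := by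
    intro ι r hr
    rw [← support_eq_empty]
    exact Finset.eq_empty_of_forall_notMem fun d hd => hr d hd
  obtain rfl | ⟨n, rfl⟩ : k = 1 ∨ ∃ n, k = n + 2 := by
    rcases k with _ | _ | n
    · omega
    · exact Or.inl rfl
    · exact Or.inr ⟨n, rfl⟩
  · have hz : ∀ p₁ p₂ ρ, U1curlBounds 1 p₁ p₂ ρ → p₁ = 0 ∧ p₂ = 0 ∧ ρ = 0 := by
      rintro p₁ p₂ ρ ⟨h1, h2, h3⟩
      refine ⟨hsupp fun d hd => ?_, hsupp fun d hd => ?_, hsupp fun d hd => ?_⟩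
      · have := h1 d hd; push_cast at this; omega
      · have := h2 d hd; push_cast at this; omega
      · have := h3 d hd; push_cast at this; omega
    have hQ : ∀ f (l m : ℤ), f ∈ Qsp l m (((1 : ℕ) : ℤ) - 2) (1 + 2) → f = 0 := by
      intro f l m hf
      unfold Qsp at hf
      have he : {f | ∃ a b c : ℕ, (a : ℤ) ≤ l ∧ (b : ℤ) ≤ m ∧ (c : ℤ) ≤ ((1 : ℕ) : ℤ) - 2 ∧
          f = qmon (1 + 2) a b c} = ∅ := by
        ext f
        simp only [Set.mem_ofPred_eq, Set.mem_empty_iff_false, iff_false]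
        rintro ⟨a, b, c, -, -, h, -⟩
        push_cast at h
        omega
      rw [he] at hf
      simpa using hf
    have hσ0 : σ = 0 := hsupp fun d hd => by have := hσ d hd; push_cast at this; omega
    have hτ0 : τ = 0 := hsupp fun d hd => by have := hτ d hd; push_cast at this; omega
    refine ⟨⟨0, 0, 0, 0, 0, 0, 0, ?_, ?_, Submodule.zero_mem _, ?_⟩, ?_⟩
    · simp [U1curlBounds]
    · simp [U2divBounds]
    · intro q hq
      rw [hQ _ _ _ hχ₁, hQ _ _ _ hχ₂, hQ _ _ _ hχ₃, hσ0, hτ0]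
      simp [U2zeroFun, U2divFun, U1curlFun, curl3, pdx, pdy, pdz, bub1, bub2]
    · intro p₁ p₂ p₁' p₂' ρ ρ' p p' t s t' s' χ χ' hb hb' _ _ _ _ h h' q hq
      obtain ⟨rfl, rfl, rfl⟩ := hz _ _ _ hb
      obtain ⟨rfl, rfl, rfl⟩ := hz _ _ _ hb'
      refine ⟨rfl, ?_⟩
      have := (h q hq).symm.trans (h' q hq)
      exact add_left_cancel this
  · have c1 : ((n + 2 : ℕ) : ℤ) - 1 = ((n + 1 : ℕ) : ℤ) := by push_cast; ring
    have c2 : ((n + 2 : ℕ) : ℤ) - 2 = (n : ℤ) := by push_cast; ring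
    constructor
    · obtain ⟨N₁, hN₁, e₁⟩ := Qsp_poly _ _ _ _ _ _ _ c2 c1 c2 χ₁ hχ₁
      obtain ⟨N₂, hN₂, e₂⟩ := Qsp_poly _ _ _ _ _ _ _ c1 c2 c2 χ₂ hχ₂
      obtain ⟨p₁, p₂, ρ, p, t, s, W, h1, h2, h3, h4, h5, h6, h7, h8⟩ :=
        exist_n n σ τ ((bd_of2 c1 c2).mp hσ) ((bd_of2 c2 c1).mp hτ) χ₁ χ₂ χ₃ N₁ N₂ hN₁ hN₂ e₁ e₂
      refine ⟨p₁, p₂, ρ, p, t, s, _, ⟨(bd_of3 c1 c2 c2).mpr h1, (bd_of3 c2 c1 c2).mpr h2,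
        (bd_of2 c2 c2).mpr h3⟩, ⟨(bd_of2 c2 c2).mpr h4, ?_, ?_⟩, ?_, h8⟩
      · intro m hm
        have := Polynomial.le_natDegree_of_mem_supp m hm
        omega
      · intro m hm
        have := Polynomial.le_natDegree_of_mem_supp m hm
        omega
      · exact Submodule.add_mem _ hχ₃ (poly_Qsp _ _ _ _ _ _ _ c1 c1 c2 W h7)
    · intro p₁ p₂ p₁' p₂' ρ ρ' p p' t s t' s' χ χ' hb hb' _ _ _ _ h h' q hq
      have b1 : degreeOf 2 p₁ ≤ n := (bd_of3 c1 c2 c2).mp hb.1 2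
      have b2 : degreeOf 2 p₂ ≤ n := (bd_of3 c2 c1 c2).mp hb.2.1 2
      have b1' : degreeOf 2 p₁' ≤ n := (bd_of3 c1 c2 c2).mp hb'.1 2
      have b2' : degreeOf 2 p₂' ≤ n := (bd_of3 c2 c1 c2).mp hb'.2.1 2
      obtain ⟨rfl, rfl, rfl⟩ := unique_n n p₁ p₂ p₁' p₂' ρ ρ' p p' t s t' s' χ χ' b1 b2 b1' b2'
        (fun q hq => (h q hq).symm.trans (h' q hq))
      exact ⟨rfl, add_left_cancel ((h q hq).symm.trans (h' q hq))⟩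

end
end

section
/- Fix an integer k ≥ 1. For every u ∈ Q^{k−1,k−1,k−1}_{k+3} there exist a unique w ∈ U^{(2),k}_{0,div}(Ω∞) and a unique λ ∈ ℝ such that u(x,y,z) = (div w)(x,y,z) + λ/(1+z)⁴ for all (x,y,z) ∈ Ω∞°. (The function (x,y,z) ↦ λ/(1+z)⁴ is the pullback under φ of the constant 3-form λ on the finite pyramid; this is the decomposition U^{(3),k} = div U^{(2),k}_{0,div} ⊕ ℝ.) -/
noncomputable section

/-- The divergence of a vector field at a point. -/
def div3 (f : ℝ × ℝ × ℝ → ℝ × ℝ × ℝ) (p : ℝ × ℝ × ℝ) : ℝ :=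
  fderiv ℝ (fun q => (f q).1) p ((1 : ℝ), (0 : ℝ), (0 : ℝ)) +
  fderiv ℝ (fun q => (f q).2.1) p ((0 : ℝ), (1 : ℝ), (0 : ℝ)) +
  fderiv ℝ (fun q => (f q).2.2) p ((0 : ℝ), (0 : ℝ), (1 : ℝ))

open Filter Topology

/-- The mixed derivative of r plus the derivatives of s and t. -/
def Dfun (p : MvPolynomial (Fin 2) ℝ) (t s : Polynomial ℝ) (x y : ℝ) : ℝ :=
  MvPolynomial.eval ![x, y] (MvPolynomial.pderiv 0 (MvPolynomial.pderiv 1 (bub2 p))) +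
    (Polynomial.derivative (bub1 s)).eval y + (Polynomial.derivative (bub1 t)).eval x

lemma mv_hasFDerivAt (P : MvPolynomial (Fin 2) ℝ) (q : ℝ × ℝ × ℝ) :
    HasFDerivAt (fun q : ℝ × ℝ × ℝ => MvPolynomial.eval ![q.1, q.2.1] P)
      (MvPolynomial.eval ![q.1, q.2.1] (MvPolynomial.pderiv 0 P) •
          ContinuousLinearMap.fst ℝ ℝ (ℝ × ℝ) +
        MvPolynomial.eval ![q.1, q.2.1] (MvPolynomial.pderiv 1 P) •
          (ContinuousLinearMap.fst ℝ ℝ ℝ).comp (ContinuousLinearMap.snd ℝ ℝ (ℝ × ℝ))) q := by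
  induction P using MvPolynomial.induction_on with
  | C a => simpa using hasFDerivAt_const a q
  | add P Q hP hQ =>
    have := hP.add hQ
    have hf : (fun q : ℝ × ℝ × ℝ => MvPolynomial.eval ![q.1, q.2.1] (P + Q)) =
        (fun q => MvPolynomial.eval ![q.1, q.2.1] P) +
          (fun q => MvPolynomial.eval ![q.1, q.2.1] Q) := by
      funext q; simp
    rw [hf]
    refine this.congr_fderiv ?_
    simp only [map_add, add_smul]
    abel
  | mul_X P i hP =>
    have h0 : HasFDerivAt (fun q : ℝ × ℝ × ℝ => q.1) (ContinuousLinearMap.fst ℝ ℝ (ℝ × ℝ)) q :=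
      (ContinuousLinearMap.fst ℝ ℝ (ℝ × ℝ)).hasFDerivAt
    have h1 : HasFDerivAt (fun q : ℝ × ℝ × ℝ => q.2.1)
        ((ContinuousLinearMap.fst ℝ ℝ ℝ).comp (ContinuousLinearMap.snd ℝ ℝ (ℝ × ℝ))) q :=
      ((ContinuousLinearMap.fst ℝ ℝ ℝ).comp (ContinuousLinearMap.snd ℝ ℝ (ℝ × ℝ))).hasFDerivAt
    fin_cases i
    · have := hP.mul h0
      have hf : (fun q : ℝ × ℝ × ℝ => MvPolynomial.eval ![q.1, q.2.1] (P * MvPolynomial.X 0)) =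
          (fun q => MvPolynomial.eval ![q.1, q.2.1] P) * (fun q => q.1) := by
        funext q; simp
      simp only [Fin.zero_eta]
      rw [hf]
      refine this.congr_fderiv ?_
      ext <;> simp [MvPolynomial.pderiv_X]
    · have := hP.mul h1
      have hf : (fun q : ℝ × ℝ × ℝ => MvPolynomial.eval ![q.1, q.2.1] (P * MvPolynomial.X 1)) =
          (fun q => MvPolynomial.eval ![q.1, q.2.1] P) * (fun q => q.2.1) := by
        funext q; simp
      simp only [Fin.mk_one]
      rw [hf]
      refine this.congr_fderiv ?_
      ext <;> simp [MvPolynomial.pderiv_X]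

lemma pderiv01_comm (P : MvPolynomial (Fin 2) ℝ) :
    MvPolynomial.pderiv 1 (MvPolynomial.pderiv 0 P) =
      MvPolynomial.pderiv 0 (MvPolynomial.pderiv 1 P) := by
  induction P using MvPolynomial.induction_on with
  | C a => simp
  | add P Q hP hQ => simp [hP, hQ]
  | mul_X P i hP =>
    fin_cases i <;> simp [hP, MvPolynomial.pderiv_X, Derivation.leibniz, add_comm]

lemma mv_hasDerivAt_x (P : MvPolynomial (Fin 2) ℝ) (x y : ℝ) :
    HasDerivAt (fun x => MvPolynomial.eval ![x, y] P)
      (MvPolynomial.eval ![x, y] (MvPolynomial.pderiv 0 P)) x := by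
  have h := (mv_hasFDerivAt P (x, y, 0)).comp_hasDerivAt x
    ((hasDerivAt_id x).prodMk (hasDerivAt_const x (y, (0:ℝ))))
  simpa [Function.comp_def] using h

lemma mv_hasDerivAt_y (P : MvPolynomial (Fin 2) ℝ) (x y : ℝ) :
    HasDerivAt (fun y => MvPolynomial.eval ![x, y] P)
      (MvPolynomial.eval ![x, y] (MvPolynomial.pderiv 1 P)) y := by
  have h := (mv_hasFDerivAt P (x, y, 0)).comp_hasDerivAt y
    ((hasDerivAt_const y x).prodMk ((hasDerivAt_id y).prodMk (hasDerivAt_const y (0:ℝ))))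
  simpa [Function.comp_def] using h

lemma fderiv_x {F : ℝ × ℝ × ℝ → ℝ} {x y z F' : ℝ} (hF : DifferentiableAt ℝ F (x, y, z))
    (h : HasDerivAt (fun x => F (x, y, z)) F' x) :
    fderiv ℝ F (x, y, z) (1, 0, 0) = F' := by
  have := hF.hasFDerivAt.comp_hasDerivAt x
    ((hasDerivAt_id x).prodMk (hasDerivAt_const x (y, z)))
  exact this.unique h

lemma fderiv_y {F : ℝ × ℝ × ℝ → ℝ} {x y z F' : ℝ} (hF : DifferentiableAt ℝ F (x, y, z))
    (h : HasDerivAt (fun y => F (x, y, z)) F' y) :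
    fderiv ℝ F (x, y, z) (0, 1, 0) = F' := by
  have := hF.hasFDerivAt.comp_hasDerivAt y
    ((hasDerivAt_const y x).prodMk ((hasDerivAt_id y).prodMk (hasDerivAt_const y z)))
  exact this.unique h

lemma fderiv_z {F : ℝ × ℝ × ℝ → ℝ} {x y z F' : ℝ} (hF : DifferentiableAt ℝ F (x, y, z))
    (h : HasDerivAt (fun z => F (x, y, z)) F' z) :
    fderiv ℝ F (x, y, z) (0, 0, 1) = F' := by
  have := hF.hasFDerivAt.comp_hasDerivAt z
    ((hasDerivAt_const z x).prodMk ((hasDerivAt_const z y).prodMk (hasDerivAt_id z)))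
  exact this.unique h

lemma div3_U2divFun (k : ℕ) (hk : 1 ≤ k) (p : MvPolynomial (Fin 2) ℝ) (t s : Polynomial ℝ)
    (χ : ℝ × ℝ × ℝ → ℝ) (x y z : ℝ) (hz : 0 < z) (hχ : DifferentiableAt ℝ χ (x, y, z)) :
    div3 (U2divFun k p t s χ) (x, y, z) =
      ((k : ℝ) - 1) * z ^ (k - 2) / (1 + z) ^ (k + 2) * Dfun p t s x y +
        deriv (fun z => z * χ (x, y, z)) z := by
  have hz1 : (1 + z) ≠ 0 := by positivity
  have hg : DifferentiableAt ℝ (fun q : ℝ × ℝ × ℝ => q.2.2 ^ (k - 1) / (1 + q.2.2) ^ (k + 2))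
      (x, y, z) := by
    have h1 : DifferentiableAt ℝ (fun q : ℝ × ℝ × ℝ => q.2.2 ^ (k - 1)) (x, y, z) := by fun_prop
    have h2 : DifferentiableAt ℝ (fun q : ℝ × ℝ × ℝ => (1 + q.2.2) ^ (k + 2)) (x, y, z) := by
      fun_prop
    have h3 : (1 + z) ^ (k + 2) ≠ 0 := pow_ne_zero _ hz1
    simp only [div_eq_mul_inv]
    exact h1.mul (h2.inv h3)
  have hM : ∀ P : MvPolynomial (Fin 2) ℝ, DifferentiableAt ℝ
      (fun q : ℝ × ℝ × ℝ => MvPolynomial.eval ![q.1, q.2.1] P) (x, y, z) :=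
    fun P => (mv_hasFDerivAt P _).differentiableAt
  have hP1 : ∀ P : Polynomial ℝ, DifferentiableAt ℝ
      (fun q : ℝ × ℝ × ℝ => P.eval q.1) (x, y, z) :=
    fun P => P.differentiable.differentiableAt.comp (x, y, z) (by fun_prop)
  have hP2 : ∀ P : Polynomial ℝ, DifferentiableAt ℝ
      (fun q : ℝ × ℝ × ℝ => P.eval q.2.1) (x, y, z) :=
    fun P => P.differentiable.differentiableAt.comp (x, y, z) (by fun_prop)
  have hχz : DifferentiableAt ℝ (fun z => z * χ (x, y, z)) z := by
    have : DifferentiableAt ℝ (fun z : ℝ => χ (x, y, z)) z :=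
      hχ.comp z (f := fun z : ℝ => ((x, y, z) : ℝ × ℝ × ℝ)) (by fun_prop)
    fun_prop
  have e1 : fderiv ℝ (fun q => (U2divFun k p t s χ q).1) (x, y, z) (1, 0, 0) =
      (z ^ (k - 1) / (1 + z) ^ (k + 2)) *
        (MvPolynomial.eval ![x, y] (MvPolynomial.pderiv 0 (MvPolynomial.pderiv 1 (bub2 p))) +
          2 * (Polynomial.derivative (bub1 t)).eval x) := by
    apply fderiv_x
    · simp only [U2divFun, Prod.fst_add, Prod.smul_fst, smul_eq_mul, add_zero]
      exact hg.mul ((hM _).add ((hP1 _).const_mul 2))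
    · simp only [U2divFun, Prod.fst_add, Prod.smul_fst, smul_eq_mul, add_zero]
      exact ((mv_hasDerivAt_x _ x y).add (((bub1 t).hasDerivAt x).const_mul 2)).const_mul _
  have e2 : fderiv ℝ (fun q => (U2divFun k p t s χ q).2.1) (x, y, z) (0, 1, 0) =
      (z ^ (k - 1) / (1 + z) ^ (k + 2)) *
        (MvPolynomial.eval ![x, y] (MvPolynomial.pderiv 0 (MvPolynomial.pderiv 1 (bub2 p))) +
          2 * (Polynomial.derivative (bub1 s)).eval y) := by
    apply fderiv_y
    · simp only [U2divFun, Prod.fst_add, Prod.snd_add, Prod.smul_fst, Prod.smul_snd, smul_eq_mul,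
        add_zero]
      exact hg.mul ((hM _).add ((hP2 _).const_mul 2))
    · simp only [U2divFun, Prod.fst_add, Prod.snd_add, Prod.smul_fst, Prod.smul_snd, smul_eq_mul,
        add_zero]
      have := ((mv_hasDerivAt_y (MvPolynomial.pderiv 0 (bub2 p)) x y).add
        (((bub1 s).hasDerivAt y).const_mul 2)).const_mul (z ^ (k - 1) / (1 + z) ^ (k + 2))
      rw [pderiv01_comm] at this
      exact this
  have hpow : HasDerivAt (fun z : ℝ => z ^ (k - 1) / (1 + z) ^ (k + 2) * (1 + z))
      (((k : ℝ) - 1) * z ^ (k - 2) / (1 + z) ^ (k + 2) -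
        2 * (z ^ (k - 1) / (1 + z) ^ (k + 2))) z := by
    have h1 := ((hasDerivAt_pow (k - 1) z).div
      (((hasDerivAt_id z).const_add 1).pow (k + 2)) (pow_ne_zero _ hz1)).mul
      ((hasDerivAt_id z).const_add 1)
    refine h1.congr_deriv ?_
    obtain ⟨m, rfl⟩ : ∃ m, k = m + 1 := ⟨k - 1, by omega⟩
    simp only [id, Nat.add_sub_cancel, Pi.div_apply, Pi.pow_apply]
    rcases m with _ | m
    · simp
      field_simp
      ring
    · simp only [Nat.add_sub_cancel, show m + 1 + 1 - 2 = m by omega]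
      push_cast
      field_simp
      ring
  have e3 : fderiv ℝ (fun q => (U2divFun k p t s χ q).2.2) (x, y, z) (0, 0, 1) =
      (((k : ℝ) - 1) * z ^ (k - 2) / (1 + z) ^ (k + 2) -
        2 * (z ^ (k - 1) / (1 + z) ^ (k + 2))) * Dfun p t s x y +
        deriv (fun z => z * χ (x, y, z)) z := by
    apply fderiv_z
    · simp only [U2divFun, Prod.snd_add, Prod.smul_snd, smul_eq_mul]
      exact (hg.mul ((by fun_prop : DifferentiableAt ℝ (fun q : ℝ × ℝ × ℝ => 1 + q.2.2) (x, y, z)).mul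
        (((hM _).add (hP2 _)).add (hP1 _)))).add
        ((by fun_prop : DifferentiableAt ℝ (fun q : ℝ × ℝ × ℝ => q.2.2) (x, y, z)).mul hχ)
    · simp only [U2divFun, Prod.snd_add, Prod.smul_snd, smul_eq_mul]
      have := (hpow.mul_const (Dfun p t s x y)).add hχz.hasDerivAt
      refine this.congr_of_eventuallyEq (Eventually.of_forall fun z => ?_)
      simp only [Pi.add_apply, Dfun]
      ring
  rw [div3, e1, e2, e3, Dfun]
  ring

lemma Qsp_reg (k : ℕ) (l m : ℤ) (χ : ℝ × ℝ × ℝ → ℝ)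
    (hχ : χ ∈ Qsp l m ((k : ℤ) - 2) (k + 2)) :
    (∀ x y z : ℝ, 0 ≤ z → DifferentiableAt ℝ χ (x, y, z)) ∧
      ∀ x y : ℝ, Tendsto (fun z => z * χ (x, y, z)) atTop (𝓝 0) := by
  unfold Qsp at hχ
  induction hχ using Submodule.span_induction with
  | mem f hf =>
    obtain ⟨a, b, c, -, -, hc, rfl⟩ := hf
    constructor
    · intro x y z hz
      have h1 : DifferentiableAt ℝ (fun q : ℝ × ℝ × ℝ => q.1 ^ a * q.2.1 ^ b * q.2.2 ^ c)
        (x, y, z) := by fun_prop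
      have h2 : DifferentiableAt ℝ (fun q : ℝ × ℝ × ℝ => (1 + q.2.2) ^ (k + 2)) (x, y, z) := by
        fun_prop
      have h3 : (1 + z) ^ (k + 2) ≠ 0 := by positivity
      unfold qmon
      simp only [div_eq_mul_inv]
      exact h1.mul (h2.inv h3)
    · intro x y
      have h0 : Tendsto (fun z : ℝ => z * z ^ c / (1 + z) ^ (k + 2)) atTop (𝓝 0) := by
        have hl : Tendsto (fun z : ℝ => (1 + z)⁻¹) atTop (𝓝 0) :=
          tendsto_inv_atTop_zero.comp (tendsto_atTop_add_const_left _ _ tendsto_id)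
        refine squeeze_zero' ?_ ?_ hl
        · filter_upwards [eventually_ge_atTop 0] with z hz
          positivity
        · filter_upwards [eventually_ge_atTop 0] with z hz
          rw [div_le_iff₀ (by positivity)]
          have e : (1 + z)⁻¹ * (1 + z) ^ (k + 2) = (1 + z) ^ (k + 1) := by
            field_simp
            ring
          rw [e, ← pow_succ']
          calc z ^ (c + 1) ≤ (1 + z) ^ (c + 1) := by gcongr; linarith
            _ ≤ (1 + z) ^ (k + 1) := pow_le_pow_right₀ (by linarith) (by omega)
      have := h0.const_mul (x ^ a * y ^ b)
      rw [mul_zero] at this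
      refine this.congr fun z => ?_
      simp only [qmon]
      ring
  | zero =>
    exact ⟨fun x y z _ => differentiableAt_const (0 : ℝ), fun x y => by simp⟩
  | add f g _ _ hf hg =>
    refine ⟨fun x y z hz => (hf.1 x y z hz).add (hg.1 x y z hz), fun x y => ?_⟩
    have := (hf.2 x y).add (hg.2 x y)
    rw [add_zero] at this
    refine this.congr fun z => ?_
    simp only [Pi.add_apply]
    ring
  | smul a f _ hf =>
    refine ⟨fun x y z hz => (hf.1 x y z hz).const_smul a, fun x y => ?_⟩
    have := (hf.2 x y).const_mul a
    rw [mul_zero] at this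
    refine this.congr fun z => ?_
    simp only [Pi.smul_apply, smul_eq_mul]
    ring

lemma diff_z {χ : ℝ × ℝ × ℝ → ℝ} {x y z : ℝ} (h : DifferentiableAt ℝ χ (x, y, z)) :
    DifferentiableAt ℝ (fun z => z * χ (x, y, z)) z := by
  have : DifferentiableAt ℝ (fun z : ℝ => χ (x, y, z)) z :=
    h.comp z (f := fun z : ℝ => ((x, y, z) : ℝ × ℝ × ℝ)) (by fun_prop)
  fun_prop

lemma no_pos (f w : ℝ → ℝ) (c : ℝ) (hf : ContinuousOn f (Set.Ici 0)) (h0 : f 0 = 0)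
    (hl : Tendsto f atTop (𝓝 0)) (hd : ∀ z, 0 < z → deriv f z = c * w z)
    (hw : ∀ z, 0 < z → 0 < w z) : ¬ 0 < c := by
  intro hc
  have hm : StrictMonoOn f (Set.Ici 0) := by
    refine strictMonoOn_of_deriv_pos (convex_Ici 0) hf fun z hz => ?_
    rw [interior_Ici] at hz
    rw [hd z hz]
    exact mul_pos hc (hw z hz)
  have h1 : 0 < f 1 := by
    have := hm (Set.self_mem_Ici) (Set.mem_Ici.2 zero_le_one) (zero_lt_one)
    linarith
  have h2 : f 1 ≤ 0 := by
    refine ge_of_tendsto hl ?_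
    filter_upwards [eventually_ge_atTop 1] with z hz
    exact hm.monotoneOn (Set.mem_Ici.2 zero_le_one) (Set.mem_Ici.2 (by linarith)) hz
  linarith

lemma coef_zero (f w : ℝ → ℝ) (c : ℝ) (hf : ContinuousOn f (Set.Ici 0)) (h0 : f 0 = 0)
    (hl : Tendsto f atTop (𝓝 0)) (hd : ∀ z, 0 < z → deriv f z = c * w z)
    (hw : ∀ z, 0 < z → 0 < w z) : c = 0 := by
  have h1 := no_pos f w c hf h0 hl hd hw
  have h2 := no_pos (-f) w (-c) hf.neg (by simp [h0]) (by rw [← neg_zero]; exact hl.neg)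
    (fun z hz => by rw [deriv.neg, hd z hz]; ring) hw
  linarith

lemma const01 (f f' : ℝ → ℝ) (h : ∀ x, HasDerivAt f (f' x) x) (h0 : ∀ x ∈ Set.Ioo (0:ℝ) 1, f' x = 0)
    (x : ℝ) (hx : 0 < x) (hx1 : x ≤ 1) : f x = f 0 := by
  obtain ⟨c, hc, e⟩ := exists_hasDerivAt_eq_slope f f' hx
    (fun y _ => (h y).continuousAt.continuousWithinAt) (fun y _ => h y)
  rw [h0 c ⟨hc.1, hc.2.trans_le hx1⟩, eq_comm, div_eq_zero_iff] at e
  rcases e with e | e <;> linarith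

lemma bub2_y_edge (p : MvPolynomial (Fin 2) ℝ) (y x : ℝ) (hx : x = 0 ∨ x = 1) :
    MvPolynomial.eval ![x, y] (MvPolynomial.pderiv 1 (bub2 p)) = 0 := by
  rcases hx with rfl | rfl <;> simp [bub2, MvPolynomial.pderiv_X, Derivation.leibniz]

lemma bub2_x_edge (p : MvPolynomial (Fin 2) ℝ) (y x : ℝ) (hy : y = 0 ∨ y = 1) :
    MvPolynomial.eval ![x, y] (MvPolynomial.pderiv 0 (bub2 p)) = 0 := by
  rcases hy with rfl | rfl <;> simp [bub2, MvPolynomial.pderiv_X, Derivation.leibniz]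

lemma bub1_edge (t : Polynomial ℝ) (x : ℝ) (hx : x = 0 ∨ x = 1) : (bub1 t).eval x = 0 := by
  rcases hx with rfl | rfl <;> simp [bub1]

lemma D_const (p : MvPolynomial (Fin 2) ℝ) (t s : Polynomial ℝ) (d : ℝ)
    (h : ∀ x ∈ Set.Ioo (0:ℝ) 1, ∀ y ∈ Set.Ioo (0:ℝ) 1, Dfun p t s x y = d) :
    d = 0 ∧ ∀ x ∈ Set.Ioo (0:ℝ) 1, ∀ y ∈ Set.Ioo (0:ℝ) 1,
      MvPolynomial.eval ![x, y] (MvPolynomial.pderiv 1 (bub2 p)) = 0 ∧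
      MvPolynomial.eval ![x, y] (MvPolynomial.pderiv 0 (bub2 p)) = 0 ∧
      (bub1 t).eval x = 0 ∧ (bub1 s).eval y = 0 := by
  have hs : ∀ y ∈ Set.Ioo (0:ℝ) 1, (Polynomial.derivative (bub1 s)).eval y = d := by
    intro y hy
    have := const01 (fun x => MvPolynomial.eval ![x, y] (MvPolynomial.pderiv 1 (bub2 p)) +
      x * (Polynomial.derivative (bub1 s)).eval y + (bub1 t).eval x - x * d)
      (fun x => Dfun p t s x y - d) (fun x => by
        have := (((mv_hasDerivAt_x (MvPolynomial.pderiv 1 (bub2 p)) x y).add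
          ((hasDerivAt_id x).mul_const ((Polynomial.derivative (bub1 s)).eval y))).add
          ((bub1 t).hasDerivAt x)).sub ((hasDerivAt_id x).mul_const d)
        refine this.congr_deriv ?_
        simp [Dfun]) (fun x hx => by rw [h x hx y hy, sub_self]) 1 one_pos le_rfl
    simp only [bub2_y_edge p y 1 (Or.inr rfl), bub2_y_edge p y 0 (Or.inl rfl),
      bub1_edge t 0 (Or.inl rfl), bub1_edge t 1 (Or.inr rfl)] at this
    linarith
  have hd : d = 0 := by
    have := const01 (fun y => (bub1 s).eval y - y * d)
      (fun y => (Polynomial.derivative (bub1 s)).eval y - d) (fun y => by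
        have := ((bub1 s).hasDerivAt y).sub ((hasDerivAt_id y).mul_const d)
        refine this.congr_deriv ?_
        simp) (fun y hy => by rw [hs y hy, sub_self]) 1 one_pos le_rfl
    simp only [bub1_edge s 0 (Or.inl rfl), bub1_edge s 1 (Or.inr rfl)] at this
    linarith
  subst hd
  have hs0 : ∀ y ∈ Set.Ioo (0:ℝ) 1, (bub1 s).eval y = 0 := by
    intro y hy
    rw [const01 (fun y => (bub1 s).eval y) _ (fun y => (bub1 s).hasDerivAt y) hs y hy.1 hy.2.le]
    exact bub1_edge s 0 (Or.inl rfl)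
  have ht : ∀ x ∈ Set.Ioo (0:ℝ) 1, (Polynomial.derivative (bub1 t)).eval x = 0 := by
    intro x hx
    have := const01 (fun y => MvPolynomial.eval ![x, y] (MvPolynomial.pderiv 0 (bub2 p)) +
      y * (Polynomial.derivative (bub1 t)).eval x + (bub1 s).eval y)
      (fun y => Dfun p t s x y) (fun y => by
        have := ((mv_hasDerivAt_y (MvPolynomial.pderiv 0 (bub2 p)) x y).add
          ((hasDerivAt_id y).mul_const ((Polynomial.derivative (bub1 t)).eval x))).add
          ((bub1 s).hasDerivAt y)
        refine this.congr_deriv ?_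
        rw [pderiv01_comm]
        simp [Dfun]
        ring) (fun y hy => h x hx y hy) 1 one_pos le_rfl
    simp only [bub2_x_edge p 1 x (Or.inr rfl), bub2_x_edge p 0 x (Or.inl rfl),
      bub1_edge s 0 (Or.inl rfl), bub1_edge s 1 (Or.inr rfl)] at this
    linarith
  have ht0 : ∀ x ∈ Set.Ioo (0:ℝ) 1, (bub1 t).eval x = 0 := by
    intro y hy
    rw [const01 (fun y => (bub1 t).eval y) _ (fun y => (bub1 t).hasDerivAt y) ht y hy.1 hy.2.le]
    exact bub1_edge t 0 (Or.inl rfl)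
  have hr : ∀ x ∈ Set.Ioo (0:ℝ) 1, ∀ y ∈ Set.Ioo (0:ℝ) 1,
      MvPolynomial.eval ![x, y] (MvPolynomial.pderiv 0 (MvPolynomial.pderiv 1 (bub2 p))) = 0 := by
    intro x hx y hy
    have := h x hx y hy
    rw [Dfun, hs y hy, ht x hx] at this
    linarith
  refine ⟨rfl, fun x hx y hy => ⟨?_, ?_, ht0 x hx, hs0 y hy⟩⟩
  · rw [const01 (fun x => MvPolynomial.eval ![x, y] (MvPolynomial.pderiv 1 (bub2 p))) _
      (fun x => mv_hasDerivAt_x _ x y) (fun x hx => hr x hx y hy) x hx.1 hx.2.le]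
    exact bub2_y_edge p y 0 (Or.inl rfl)
  · rw [const01 (fun y => MvPolynomial.eval ![x, y] (MvPolynomial.pderiv 0 (bub2 p))) _
      (fun y => mv_hasDerivAt_y _ x y)
      (fun y hy => by rw [pderiv01_comm]; exact hr x hx y hy) y hy.1 hy.2.le]
    exact bub2_x_edge p 0 x (Or.inl rfl)

lemma uniq_core (k : ℕ) (hk : 1 ≤ k) (p : MvPolynomial (Fin 2) ℝ) (t s : Polynomial ℝ)
    (χ : ℝ × ℝ × ℝ → ℝ) (lam : ℝ) (l m : ℤ)
    (hk1 : k = 1 → p = 0 ∧ t = 0 ∧ s = 0)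
    (hχ : χ ∈ Qsp l m ((k : ℤ) - 2) (k + 2))
    (h : ∀ x ∈ Set.Ioo (0:ℝ) 1, ∀ y ∈ Set.Ioo (0:ℝ) 1, ∀ z : ℝ, 0 < z →
      0 = ((k : ℝ) - 1) * z ^ (k - 2) / (1 + z) ^ (k + 2) * Dfun p t s x y +
        deriv (fun z => z * χ (x, y, z)) z + lam / (1 + z) ^ 4) :
    lam = 0 ∧ ∀ q ∈ PyrInfInt, U2divFun k p t s χ q = 0 := by
  obtain ⟨hdiff, hlim⟩ := Qsp_reg k l m χ hχ
  have hcont : ∀ x y, ContinuousOn (fun z => z * χ (x, y, z)) (Set.Ici 0) := fun x y z hz =>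
    (diff_z (hdiff x y z hz)).continuousAt.continuousWithinAt
  have hhalf : (1/2 : ℝ) ∈ Set.Ioo (0:ℝ) 1 := by constructor <;> norm_num
  have hD : ∀ x ∈ Set.Ioo (0:ℝ) 1, ∀ y ∈ Set.Ioo (0:ℝ) 1,
      Dfun p t s x y = Dfun p t s (1/2) (1/2) := by
    intro x hx y hy
    rcases eq_or_lt_of_le hk with hk | hk
    · obtain ⟨rfl, rfl, rfl⟩ := hk1 hk.symm
      simp [Dfun, bub2, bub1]
    · have hkr : (0:ℝ) < (k:ℝ) - 1 := by
        have : (1:ℝ) < k := by exact_mod_cast hk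
        linarith
      have := coef_zero (fun z => z * χ (1/2, 1/2, z) - z * χ (x, y, z))
        (fun z => ((k : ℝ) - 1) * z ^ (k - 2) / (1 + z) ^ (k + 2))
        (Dfun p t s x y - Dfun p t s (1/2) (1/2)) ((hcont _ _).sub (hcont _ _)) (by simp)
        (by simpa using (hlim (1/2) (1/2)).sub (hlim x y))
        (fun z hz => by
          have e := deriv_fun_sub (diff_z (hdiff (1/2) (1/2) z hz.le))
            (diff_z (hdiff x y z hz.le))
          rw [e]
          have h1 := h x hx y hy z hz
          have h2 := h _ hhalf _ hhalf z hz
          linarith)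
        (fun z hz => by positivity)
      linarith
  obtain ⟨hd0, hvan⟩ := D_const p t s _ hD
  rw [hd0] at hD
  have hlam : lam = 0 := by
    have := coef_zero (fun z => z * χ (1/2, 1/2, z)) (fun z => 1 / (1 + z) ^ 4) (-lam)
      (hcont _ _) (by simp) (hlim _ _) (fun z hz => by
        have h2 := h _ hhalf _ hhalf z hz
        rw [hd0] at h2
        have : lam / (1 + z) ^ 4 = lam * (1 / (1 + z) ^ 4) := by ring
        linarith) (fun z hz => by positivity)
    linarith
  refine ⟨hlam, ?_⟩
  rintro ⟨x, y, z⟩ ⟨hx0, hx1, hy0, hy1, hz⟩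
  simp only at hx0 hx1 hy0 hy1 hz
  obtain ⟨e1, e2, e3, e4⟩ := hvan x ⟨hx0, hx1⟩ y ⟨hy0, hy1⟩
  have e5 := hD x ⟨hx0, hx1⟩ y ⟨hy0, hy1⟩
  have e6 : z * χ (x, y, z) = 0 := by
    obtain ⟨c, hc, e⟩ := exists_deriv_eq_slope (fun z => z * χ (x, y, z)) hz
      ((hcont x y).mono Set.Icc_subset_Ici_self)
      (fun w hw => (diff_z (hdiff x y w hw.1.le)).differentiableWithinAt)
    have h2 := h x ⟨hx0, hx1⟩ y ⟨hy0, hy1⟩ c hc.1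
    rw [e5, hlam, e] at h2
    simp only [mul_zero, zero_mul, zero_div, sub_zero, zero_add, add_zero] at h2
    rw [eq_comm, div_eq_zero_iff] at h2
    rcases h2 with h2 | h2
    · exact h2
    · exact absurd h2 hz.ne'
  rw [Dfun] at e5
  simp only [U2divFun, e1, e2, e3, e4, e5, e6]
  simp

lemma bounds_add {k : ℕ} {p p' : MvPolynomial (Fin 2) ℝ} {t s t' s' : Polynomial ℝ}
    (h : U2divBounds k p t s) (h' : U2divBounds k p' t' s') :
    U2divBounds k (p + p') (t + t') (s + s') := by
  refine ⟨fun d hd => ?_, fun n hn => ?_, fun n hn => ?_⟩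
  · rcases Finset.mem_union.1 (MvPolynomial.support_add hd) with hd | hd
    exacts [h.1 d hd, h'.1 d hd]
  · rcases Finset.mem_union.1 (Polynomial.support_add hn) with hn | hn
    exacts [h.2.1 n hn, h'.2.1 n hn]
  · rcases Finset.mem_union.1 (Polynomial.support_add hn) with hn | hn
    exacts [h.2.2 n hn, h'.2.2 n hn]

lemma bounds_smul {k : ℕ} {p : MvPolynomial (Fin 2) ℝ} {t s : Polynomial ℝ} (a : ℝ)
    (h : U2divBounds k p t s) : U2divBounds k (a • p) (a • t) (a • s) := by
  refine ⟨fun d hd => h.1 d (MvPolynomial.support_smul hd), fun n hn => h.2.1 n ?_,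
    fun n hn => h.2.2 n ?_⟩
  · exact Polynomial.support_smul a t hn
  · exact Polynomial.support_smul a s hn

lemma bounds_zero (k : ℕ) : U2divBounds k 0 0 0 := by
  simp [U2divBounds]

lemma bounds_one {p : MvPolynomial (Fin 2) ℝ} {t s : Polynomial ℝ} (h : U2divBounds 1 p t s) :
    p = 0 ∧ t = 0 ∧ s = 0 := by
  obtain ⟨h1, h2, h3⟩ := h
  refine ⟨?_, ?_, ?_⟩
  · rw [← MvPolynomial.support_eq_empty, Finset.eq_empty_iff_forall_notMem]
    intro d hd
    have := (h1 d hd).1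
    push_cast at this
    omega
  · rw [← Polynomial.support_eq_empty, Finset.eq_empty_iff_forall_notMem]
    intro d hd
    have := h2 d hd
    push_cast at this
    omega
  · rw [← Polynomial.support_eq_empty, Finset.eq_empty_iff_forall_notMem]
    intro d hd
    have := h3 d hd
    push_cast at this
    omega

lemma bub2_add (p p' : MvPolynomial (Fin 2) ℝ) : bub2 (p + p') = bub2 p + bub2 p' := by
  simp only [bub2]; ring
lemma bub2_smul (a : ℝ) (p : MvPolynomial (Fin 2) ℝ) : bub2 (a • p) = a • bub2 p := by
  simp only [bub2, mul_smul_comm]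
lemma bub1_add (p p' : Polynomial ℝ) : bub1 (p + p') = bub1 p + bub1 p' := by
  simp only [bub1]; ring
lemma bub1_smul (a : ℝ) (p : Polynomial ℝ) : bub1 (a • p) = a • bub1 p := by
  simp only [bub1, mul_smul_comm]

lemma Dfun_add (p p' : MvPolynomial (Fin 2) ℝ) (t s t' s' : Polynomial ℝ) (x y : ℝ) :
    Dfun (p + p') (t + t') (s + s') x y = Dfun p t s x y + Dfun p' t' s' x y := by
  simp only [Dfun, bub2_add, bub1_add, map_add, Polynomial.eval_add]
  ring

lemma Dfun_smul (a : ℝ) (p : MvPolynomial (Fin 2) ℝ) (t s : Polynomial ℝ) (x y : ℝ) :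
    Dfun (a • p) (a • t) (a • s) x y = a * Dfun p t s x y := by
  simp only [Dfun, bub2_smul, bub1_smul, map_smul, Derivation.map_smul, MvPolynomial.smul_eval, Polynomial.eval_smul,
    smul_eq_mul]
  ring

lemma U2divFun_sub (k : ℕ) (p p' : MvPolynomial (Fin 2) ℝ) (t s t' s' : Polynomial ℝ)
    (χ χ' : ℝ × ℝ × ℝ → ℝ) (q : ℝ × ℝ × ℝ) :
    U2divFun k (p + (-1 : ℝ) • p') (t + (-1 : ℝ) • t') (s + (-1 : ℝ) • s') (χ + (-1 : ℝ) • χ') q =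
      U2divFun k p t s χ q - U2divFun k p' t' s' χ' q := by
  simp only [U2divFun, bub2_smul, bub1_smul, bub2_add, bub1_add, map_add, map_smul, Derivation.map_smul,
    MvPolynomial.smul_eval, Polynomial.eval_smul, Polynomial.eval_add, smul_eq_mul, Pi.add_apply,
    Pi.smul_apply]
  ext <;> simp <;> ring

/-- Functions which agree on the interior with a divergence plus a multiple of `1/(1+z)^4`. -/
def Rsp (k : ℕ) : Submodule ℝ (ℝ × ℝ × ℝ → ℝ) where
  carrier := {u | ∃ p : MvPolynomial (Fin 2) ℝ, ∃ t s : Polynomial ℝ, ∃ χ : (ℝ × ℝ × ℝ) → ℝ,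
     ∃ lam : ℝ, U2divBounds k p t s ∧
       χ ∈ Qsp ((k : ℤ) - 1) ((k : ℤ) - 1) ((k : ℤ) - 2) (k + 2) ∧
       ∀ x y z : ℝ, 0 < z → u (x, y, z) =
        ((k : ℝ) - 1) * z ^ (k - 2) / (1 + z) ^ (k + 2) * Dfun p t s x y +
        deriv (fun z => z * χ (x, y, z)) z + lam / (1 + z) ^ 4}
  zero_mem' := ⟨0, 0, 0, 0, 0, bounds_zero k, Submodule.zero_mem _, fun x y z _ => by
    simp [Dfun, bub1, bub2]⟩
  add_mem' := by
    rintro u v ⟨p, t, s, χ, lam, h1, h2, h3⟩ ⟨p', t', s', χ', lam', h1', h2', h3'⟩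
    refine ⟨p + p', t + t', s + s', χ + χ', lam + lam', bounds_add h1 h1',
      Submodule.add_mem _ h2 h2', fun x y z hz => ?_⟩
    have e := deriv_fun_add (diff_z ((Qsp_reg k _ _ χ h2).1 x y z hz.le))
      (diff_z ((Qsp_reg k _ _ χ' h2').1 x y z hz.le))
    simp only [← mul_add] at e
    simp only [Pi.add_apply]
    rw [e, Dfun_add, h3 x y z hz, h3' x y z hz]
    ring
  smul_mem' := by
    rintro a u ⟨p, t, s, χ, lam, h1, h2, h3⟩
    refine ⟨a • p, a • t, a • s, a • χ, a * lam, bounds_smul a h1,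
      Submodule.smul_mem _ a h2, fun x y z hz => ?_⟩
    have e := deriv_const_mul a (diff_z ((Qsp_reg k _ _ χ h2).1 x y z hz.le))
    simp only [mul_left_comm a] at e
    simp only [Pi.smul_apply, smul_eq_mul]
    rw [e, Dfun_smul, h3 x y z hz]
    ring

lemma Rsp_congr {k : ℕ} {u v : ℝ × ℝ × ℝ → ℝ} (hu : u ∈ Rsp k)
    (h : ∀ x y z : ℝ, 0 < z → v (x, y, z) = u (x, y, z)) : v ∈ Rsp k := by
  obtain ⟨p, t, s, χ, lam, h1, h2, h3⟩ := hu
  exact ⟨p, t, s, χ, lam, h1, h2, fun x y z hz => by rw [h x y z hz, h3 x y z hz]⟩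

lemma Rsp_step (k a b c : ℕ) (ha : a + 1 ≤ k) (hb : b + 1 ≤ k) (hc : c + 2 ≤ k) :
    ((c : ℝ) + 1) • qmon (k + 3) a b c - ((k : ℝ) + 1 - c) • qmon (k + 3) a b (c + 1) ∈ Rsp k := by
  refine ⟨0, 0, 0, qmon (k + 2) a b c, 0, bounds_zero k,
    Submodule.subset_span ⟨a, b, c, by omega, by omega, by omega, rfl⟩, fun x y z hz => ?_⟩
  have hz1 : (1 + z) ≠ 0 := by positivity
  have h : HasDerivAt (fun z : ℝ => z * qmon (k + 2) a b c (x, y, z))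
      (((c : ℝ) + 1) * qmon (k + 3) a b c (x, y, z) -
        ((k : ℝ) + 1 - c) * qmon (k + 3) a b (c + 1) (x, y, z)) z := by
    have h1 := ((hasDerivAt_pow (c + 1) z).div
      (((hasDerivAt_id z).const_add 1).pow (k + 2)) (pow_ne_zero _ hz1)).const_mul (x ^ a * y ^ b)
    refine (h1.congr_of_eventuallyEq (Eventually.of_forall fun w => ?_)).congr_deriv ?_
    · simp only [qmon, Pi.div_apply, Pi.pow_apply, id]
      ring
    · simp only [qmon, Pi.pow_apply, id, Nat.add_sub_cancel, show k + 2 - 1 = k + 1 by omega]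
      push_cast
      field_simp
      ring
  rw [h.deriv]
  simp [Dfun, bub1, bub2]

lemma Rsp_lam (k : ℕ) : (fun q : ℝ × ℝ × ℝ => 1 / (1 + q.2.2) ^ 4) ∈ Rsp k :=
  ⟨0, 0, 0, 0, 1, bounds_zero k, Submodule.zero_mem _, fun x y z _ => by
    simp [Dfun, bub1, bub2]⟩

/-- One-variable polynomial whose bubble has derivative x^a - 1/(a+1). -/
def tP (a : ℕ) : Polynomial ℝ :=
  (-(1 / ((a : ℝ) + 1))) • ∑ i ∈ Finset.range a, Polynomial.X ^ i

lemma bub1_tP (a : ℕ) : bub1 (tP a) =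
    (1 / ((a : ℝ) + 1)) • (Polynomial.X ^ (a + 1) - Polynomial.X) := by
  have := mul_neg_geom_sum (Polynomial.X : Polynomial ℝ) a
  rw [bub1, tP, mul_smul_comm, mul_assoc, this, neg_smul, ← smul_neg]
  congr 1
  ring

lemma bub1_tP_deriv (a : ℕ) (x : ℝ) :
    (Polynomial.derivative (bub1 (tP a))).eval x = x ^ a - 1 / ((a : ℝ) + 1) := by
  have : (a : ℝ) + 1 ≠ 0 := by positivity
  rw [bub1_tP]
  simp
  field_simp

lemma tP_bound (k a : ℕ) (ha : a + 1 ≤ k) (n : ℕ) (hn : n ∈ (tP a).support) :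
    (n : ℤ) ≤ (k : ℤ) - 2 := by
  have h1 := Polynomial.support_smul _ _ hn
  rw [Polynomial.mem_support_iff, Polynomial.finsetSum_coeff] at h1
  obtain ⟨i, hi, h⟩ := Finset.exists_ne_zero_of_sum_ne_zero h1
  rw [Polynomial.coeff_X_pow] at h
  have : n = i := by
    by_contra hne
    simp [hne] at h
  have := Finset.mem_range.1 hi
  omega

/-- Two-variable polynomial with the product of the above as mixed derivative. -/
def pP (a b : ℕ) : MvPolynomial (Fin 2) ℝ :=
  (1 / (((a : ℝ) + 1) * ((b : ℝ) + 1))) •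
    ((∑ i ∈ Finset.range a, MvPolynomial.X 0 ^ i) * ∑ i ∈ Finset.range b, MvPolynomial.X 1 ^ i)

lemma bub2_pP (a b : ℕ) : bub2 (pP a b) =
    (1 / (((a : ℝ) + 1) * ((b : ℝ) + 1))) •
      ((MvPolynomial.X 0 ^ (a + 1) - MvPolynomial.X 0) *
        (MvPolynomial.X 1 ^ (b + 1) - MvPolynomial.X 1)) := by
  have h1 := mul_neg_geom_sum (MvPolynomial.X 0 : MvPolynomial (Fin 2) ℝ) a
  have h2 := mul_neg_geom_sum (MvPolynomial.X 1 : MvPolynomial (Fin 2) ℝ) b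
  rw [bub2, pP, mul_smul_comm]
  congr 1
  have e1 : (MvPolynomial.X 0 ^ (a + 1) - MvPolynomial.X 0 : MvPolynomial (Fin 2) ℝ) =
    -(MvPolynomial.X 0 * (1 - MvPolynomial.X 0 ^ a)) := by ring
  have e2 : (MvPolynomial.X 1 ^ (b + 1) - MvPolynomial.X 1 : MvPolynomial (Fin 2) ℝ) =
    -(MvPolynomial.X 1 * (1 - MvPolynomial.X 1 ^ b)) := by ring
  rw [e1, e2, ← h1, ← h2]
  ring

lemma bub2_pP_deriv (a b : ℕ) (x y : ℝ) :
    MvPolynomial.eval ![x, y] (MvPolynomial.pderiv 0 (MvPolynomial.pderiv 1 (bub2 (pP a b)))) =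
      (x ^ a - 1 / ((a : ℝ) + 1)) * (y ^ b - 1 / ((b : ℝ) + 1)) := by
  have : (a : ℝ) + 1 ≠ 0 := by positivity
  have : (b : ℝ) + 1 ≠ 0 := by positivity
  rw [bub2_pP]
  simp [MvPolynomial.pderiv_X, Derivation.leibniz, MvPolynomial.smul_eval]
  field_simp

lemma pP_bound (k a b : ℕ) (ha : a + 1 ≤ k) (hb : b + 1 ≤ k) (d : Fin 2 →₀ ℕ)
    (hd : d ∈ (pP a b).support) : (d 0 : ℤ) ≤ (k : ℤ) - 2 ∧ (d 1 : ℤ) ≤ (k : ℤ) - 2 := by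
  have h1 := MvPolynomial.support_smul hd
  rw [MvPolynomial.mem_support_iff, Finset.sum_mul_sum, MvPolynomial.coeff_sum] at h1
  obtain ⟨i, hi, h⟩ := Finset.exists_ne_zero_of_sum_ne_zero h1
  rw [MvPolynomial.coeff_sum] at h
  obtain ⟨j, hj, h⟩ := Finset.exists_ne_zero_of_sum_ne_zero h
  rw [MvPolynomial.X_pow_eq_monomial, MvPolynomial.X_pow_eq_monomial,
    MvPolynomial.monomial_mul, MvPolynomial.coeff_monomial] at h
  have h3 : Finsupp.single 0 i + Finsupp.single 1 j = d := by
    by_contra hne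
    simp [hne] at h
  have := Finset.mem_range.1 hi
  have := Finset.mem_range.1 hj
  subst h3
  simp
  omega

lemma Rsp_D (k a b : ℕ) (ha : a + 1 ≤ k) (hb : b + 1 ≤ k) :
    (fun q : ℝ × ℝ × ℝ => ((k : ℝ) - 1) * q.2.2 ^ (k - 2) / (1 + q.2.2) ^ (k + 2) *
      (q.1 ^ a * q.2.1 ^ b - 1 / (((a : ℝ) + 1) * ((b : ℝ) + 1)))) ∈ Rsp k := by
  refine ⟨pP a b, (1 / ((b : ℝ) + 1)) • tP a, (1 / ((a : ℝ) + 1)) • tP b, 0, 0,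
    ⟨pP_bound k a b ha hb, fun n hn => tP_bound k a ha n (Polynomial.support_smul _ _ hn),
      fun n hn => tP_bound k b hb n (Polynomial.support_smul _ _ hn)⟩, Submodule.zero_mem _,
    fun x y z hz => ?_⟩
  have e : Dfun (pP a b) ((1 / ((b : ℝ) + 1)) • tP a) ((1 / ((a : ℝ) + 1)) • tP b) x y =
      x ^ a * y ^ b - 1 / (((a : ℝ) + 1) * ((b : ℝ) + 1)) := by
    rw [Dfun, bub2_pP_deriv, bub1_smul, bub1_smul, Polynomial.derivative_smul,
      Polynomial.derivative_smul, Polynomial.eval_smul, Polynomial.eval_smul, bub1_tP_deriv,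
      bub1_tP_deriv, smul_eq_mul, smul_eq_mul]
    field_simp
    ring
  rw [e]
  simp

lemma Rsp_mu (k : ℕ) (c : ℕ) (hc : c + 1 ≤ k) : ∃ μ : ℝ, 0 < μ ∧ ∀ a b : ℕ, a + 1 ≤ k → b + 1 ≤ k →
    qmon (k + 3) a b c - μ • qmon (k + 3) a b 0 ∈ Rsp k := by
  induction c with
  | zero => exact ⟨1, one_pos, fun a b _ _ => by simp⟩
  | succ c ih =>
    obtain ⟨μ, hμ, h⟩ := ih (by omega)
    have hpos : (0:ℝ) < (k : ℝ) + 1 - c := by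
      have : (c : ℝ) + 1 + 1 ≤ k := by exact_mod_cast hc
      linarith
    refine ⟨((c : ℝ) + 1) / ((k : ℝ) + 1 - c) * μ, by positivity, fun a b ha hb => ?_⟩
    have h1 := Submodule.smul_mem _ (-(1 / ((k : ℝ) + 1 - c))) (Rsp_step k a b c ha hb (by omega))
    have h2 := Submodule.smul_mem _ (((c : ℝ) + 1) / ((k : ℝ) + 1 - c)) (h a b ha hb)
    refine Rsp_congr (Submodule.add_mem _ h1 h2) fun x y z hz => ?_
    simp only [Pi.add_apply, Pi.sub_apply, Pi.smul_apply, smul_eq_mul]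
    field_simp
    ring

lemma Rsp_q0 (k : ℕ) (hk : 1 ≤ k) : qmon (k + 3) 0 0 0 ∈ Rsp k := by
  have hmu : ∀ c : ℕ, ∃ μ : ℝ, c + 1 ≤ k → 0 < μ ∧
      qmon (k + 3) 0 0 c - μ • qmon (k + 3) 0 0 0 ∈ Rsp k := by
    intro c
    by_cases hc : c + 1 ≤ k
    · obtain ⟨μ, h1, h2⟩ := Rsp_mu k c hc
      exact ⟨μ, fun _ => ⟨h1, h2 0 0 hk hk⟩⟩
    · exact ⟨0, fun h => absurd h hc⟩
  choose μ hμ using hmu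
  have hsum : ∑ c ∈ Finset.range k, ((k - 1).choose c : ℝ) •
      (qmon (k + 3) 0 0 c - μ c • qmon (k + 3) 0 0 0) ∈ Rsp k :=
    Submodule.sum_mem _ fun c hc => Submodule.smul_mem _ _ (hμ c (Finset.mem_range.1 hc)).2
  set M := ∑ c ∈ Finset.range k, ((k - 1).choose c : ℝ) * μ c with hM
  have hMpos : 0 < M := by
    refine Finset.sum_pos (fun c hc => ?_) ⟨0, Finset.mem_range.2 hk⟩
    have hc := Finset.mem_range.1 hc
    exact mul_pos (by exact_mod_cast Nat.choose_pos (by omega)) (hμ c hc).1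
  have h := Submodule.smul_mem _ (1 / M) (Submodule.sub_mem _ (Rsp_lam k) hsum)
  refine Rsp_congr h fun x y z hz => ?_
  have hz1 : (1 + z) ≠ 0 := by positivity
  have hb : ∑ c ∈ Finset.range k, ((k - 1).choose c : ℝ) * z ^ c = (1 + z) ^ (k - 1) := by
    rw [add_comm, add_pow, Nat.sub_add_cancel hk]
    exact Finset.sum_congr rfl fun c _ => by rw [one_pow]; ring
  have e : (∑ c ∈ Finset.range k, ((k - 1).choose c : ℝ) •
      (qmon (k + 3) 0 0 c - μ c • qmon (k + 3) 0 0 0)) (x, y, z) =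
      (1 + z) ^ (k - 1) / (1 + z) ^ (k + 3) - M * (1 / (1 + z) ^ (k + 3)) := by
    rw [← hb, hM, Finset.sum_div, Finset.sum_mul, ← Finset.sum_sub_distrib, Finset.sum_apply]
    refine Finset.sum_congr rfl fun c _ => ?_
    simp only [Pi.sub_apply, Pi.smul_apply, smul_eq_mul, qmon, pow_zero]
    ring
  simp only [Pi.sub_apply, Pi.smul_apply, smul_eq_mul]
  rw [e]
  have e2 : (1 + z) ^ (k + 3) = (1 + z) ^ (k - 1) * (1 + z) ^ 4 := by
    rw [← pow_add]; congr 1; omega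
  simp only [qmon, pow_zero]
  rw [e2]
  field_simp
  ring

lemma Rsp_qmon (k a b c : ℕ) (ha : a + 1 ≤ k) (hb : b + 1 ≤ k) (hc : c + 1 ≤ k) :
    qmon (k + 3) a b c ∈ Rsp k := by
  have h00 := Rsp_q0 k (by omega)
  have hab0 : qmon (k + 3) a b 0 ∈ Rsp k := by
    rcases Nat.lt_or_ge k 2 with hk | hk
    · obtain rfl : a = 0 := by omega
      obtain rfl : b = 0 := by omega
      exact h00
    · obtain ⟨n, rfl⟩ : ∃ n, k = n + 2 := ⟨k - 2, by omega⟩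
      obtain ⟨μ, hμ, h1⟩ := Rsp_mu (n + 2) n (by omega)
      obtain ⟨ν, hν, h2⟩ := Rsp_mu (n + 2) (n + 1) (by omega)
      have hD := Submodule.smul_mem _ (1 / ((n : ℝ) + 1)) (Rsp_D (n + 2) a b ha hb)
      have e1 := Submodule.add_mem _ (h1 a b ha hb) (h2 a b ha hb)
      have e2 := Submodule.smul_mem _ (1 / (((a : ℝ) + 1) * ((b : ℝ) + 1)))
        (Submodule.add_mem _ (Submodule.add_mem _ (h1 0 0 (by omega) (by omega))
          (h2 0 0 (by omega) (by omega))) (Submodule.smul_mem _ (μ + ν) h00))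
      have e3 := Submodule.smul_mem _ (1 / (μ + ν))
        (Submodule.add_mem _ (Submodule.sub_mem _ hD e1) e2)
      refine Rsp_congr e3 fun x y z hz => ?_
      have hz1 : (1 + z) ≠ 0 := by positivity
      simp only [Pi.sub_apply, Pi.add_apply, Pi.smul_apply, smul_eq_mul, qmon, pow_zero,
        Nat.add_sub_cancel]
      push_cast
      have : (n : ℝ) + 1 ≠ 0 := by positivity
      rw [show (n : ℝ) + 2 - 1 = n + 1 by ring]
      field_simp
      ring
  obtain ⟨μ, hμ, h1⟩ := Rsp_mu k c hc
  have := Submodule.add_mem _ (h1 a b ha hb) (Submodule.smul_mem _ μ hab0)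
  simpa using this

lemma Qsp_le_Rsp (k : ℕ) :
    Qsp ((k : ℤ) - 1) ((k : ℤ) - 1) ((k : ℤ) - 1) (k + 3) ≤ Rsp k := by
  refine Submodule.span_le.2 ?_
  rintro f ⟨a, b, c, ha, hb, hc, rfl⟩
  exact Rsp_qmon k a b c (by omega) (by omega) (by omega)

/-- every `u ∈ Q^{k−1,k−1,k−1}_{k+3} = U^{(3),k}(Ω∞)` can be written,
uniquely, as `u = div w + λ/(1+z)⁴` on `Ω∞°` with `w ∈ U^{(2),k}_{0,div}(Ω∞)` and
`λ ∈ ℝ`. -/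
theorem U3_decomposition (k : ℕ) (hk : 1 ≤ k)
    (u : (ℝ × ℝ × ℝ) → ℝ)
    (hu : u ∈ Qsp ((k : ℤ) - 1) ((k : ℤ) - 1) ((k : ℤ) - 1) (k + 3)) :
    (∃ p : MvPolynomial (Fin 2) ℝ, ∃ t s : Polynomial ℝ, ∃ χ : (ℝ × ℝ × ℝ) → ℝ,
     ∃ lam : ℝ,
       U2divBounds k p t s ∧
       χ ∈ Qsp ((k : ℤ) - 1) ((k : ℤ) - 1) ((k : ℤ) - 2) (k + 2) ∧
       ∀ q ∈ PyrInfInt,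
         u q = div3 (U2divFun k p t s χ) q + lam / (1 + q.2.2) ^ 4) ∧
    (∀ p p' : MvPolynomial (Fin 2) ℝ, ∀ t s t' s' : Polynomial ℝ,
     ∀ χ χ' : (ℝ × ℝ × ℝ) → ℝ, ∀ lam lam' : ℝ,
       U2divBounds k p t s → U2divBounds k p' t' s' →
       χ ∈ Qsp ((k : ℤ) - 1) ((k : ℤ) - 1) ((k : ℤ) - 2) (k + 2) →
       χ' ∈ Qsp ((k : ℤ) - 1) ((k : ℤ) - 1) ((k : ℤ) - 2) (k + 2) →
       (∀ q ∈ PyrInfInt,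
         u q = div3 (U2divFun k p t s χ) q + lam / (1 + q.2.2) ^ 4) →
       (∀ q ∈ PyrInfInt,
         u q = div3 (U2divFun k p' t' s' χ') q + lam' / (1 + q.2.2) ^ 4) →
       lam = lam' ∧ ∀ q ∈ PyrInfInt, U2divFun k p t s χ q = U2divFun k p' t' s' χ' q) := by
  refine ⟨?_, ?_⟩
  · obtain ⟨p, t, s, χ, lam, h1, h2, h3⟩ := Qsp_le_Rsp k hu
    refine ⟨p, t, s, χ, lam, h1, h2, ?_⟩
    rintro ⟨x, y, z⟩ ⟨hx0, hx1, hy0, hy1, hz⟩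
    simp only at hz
    rw [h3 x y z hz, div3_U2divFun k hk p t s χ x y z hz ((Qsp_reg k _ _ χ h2).1 x y z hz.le)]
  · intro p p' t s t' s' χ χ' lam lam' hb hb' hχ hχ' h h'
    have hb2 := bounds_add hb (bounds_smul (-1) hb')
    have hχ2 := Submodule.add_mem _ hχ (Submodule.smul_mem _ (-1) hχ')
    have key := uniq_core k hk _ _ _ _ (lam - lam') _ _
      (fun hk1 => by subst hk1; exact bounds_one hb2) hχ2
      (fun x hx y hy z hz => by
        have hq : (x, y, z) ∈ PyrInfInt := ⟨hx.1, hx.2, hy.1, hy.2, hz⟩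
        have d1 := (Qsp_reg k _ _ χ hχ).1 x y z hz.le
        have d2 := (Qsp_reg k _ _ χ' hχ').1 x y z hz.le
        have e1 := h _ hq
        have e2 := h' _ hq
        rw [div3_U2divFun k hk p t s χ x y z hz d1] at e1
        rw [div3_U2divFun k hk p' t' s' χ' x y z hz d2] at e2
        have e := deriv_fun_sub (diff_z d1) (diff_z d2)
        have e' : (fun z => z * (χ + (-1 : ℝ) • χ') (x, y, z)) =
            fun z => z * χ (x, y, z) - z * χ' (x, y, z) := by
          funext z
          simp only [Pi.add_apply, Pi.smul_apply, smul_eq_mul]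
          ring
        rw [e', e, Dfun_add, Dfun_smul, sub_div]
        simp only at e1 e2
        linarith)
    refine ⟨sub_eq_zero.1 key.1, fun q hq => ?_⟩
    have := key.2 q hq
    rw [U2divFun_sub] at this
    exact sub_eq_zero.1 this

end
end
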